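/- arXiv:1303.4040 — 3 statements merged into one kernel-verified Lean document; each statement's English description precedes it below -/
import Mathlib

section
/- Let M₀, M₁ be natural numbers with M := M₀ + 2M₁ ≥ 1. Let α₁, …, α_M be pairwise distinct complex numbers with Re α_m > 0 for all m, such that α_m is real for 1 ≤ m ≤ M₀, Im α_m > 0 for M₀+1 ≤ m ≤ M₀+M₁, and α_{M₁+m} = conj(α_m) for M₀+1 ≤ m ≤ M₀+M₁. Let P₁, …, P_M be nonzero polynomials with complex coefficients such that P_m has real coefficients for 1 ≤ m ≤ M₀ and P_{M₁+m} is the coefficientwise complex conjugate of P_m for M₀+1 ≤ m ≤ M₀+M₁. Set K_m := deg P_m, and for 1 ≤ m ≤ M₀ let p_m ≠ 0 be the (real) leading coefficient of P_m. Define the real-valued kernel h(t) = Σ_{m=1}^M P_m(t) e^{-α_m t} for t > 0. For each 1 ≤ m ≤ M₀ define: N₊^{(m)} = N₋^{(m)} = (K_m+1)/2 if K_m is odd; N₊^{(m)} = K_m/2 + 1 and N₋^{(m)} = K_m/2 if K_m is even and p_m > 0; N₊^{(m)} = K_m/2 and N₋^{(m)} = K_m/2 + 1 if K_m is even and p_m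 < 0. Then N₊(Q_h) = Σ_{m=1}^{M₀} N₊^{(m)} + Σ_{m=M₀+1}^{M₀+M₁} (K_m + 1) and N₋(Q_h) = Σ_{m=1}^{M₀} N₋^{(m)} + Σ_{m=M₀+1}^{M₀+M₁} (K_m + 1). -/
open MeasureTheory
open scoped ComplexOrder

noncomputable section

/-- Complex-valued test functions: smooth, compactly supported, support inside `(0,∞)`. -/
def IsTestFun (f : ℝ → ℂ) : Prop :=
  ContDiff ℝ (⊤ : ℕ∞) f ∧ HasCompactSupport f ∧ tsupport f ⊆ Set.Ioi 0

/-- The Hankel quadratic form `Q_h[f] = ∫₀^∞∫₀^∞ h(t+s) f(s) conj(f(t)) ds dt`. -/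
def hankelQF (h : ℝ → ℂ) (f : ℝ → ℂ) : ℂ :=
  ∫ t in Set.Ioi (0:ℝ), ∫ s in Set.Ioi (0:ℝ), h (t + s) * f s * (starRingEnd ℂ) (f t)

/-- There is an `N`-dimensional subspace of test functions on which `Q` is strictly positive. -/
def posSubspace (Q : (ℝ → ℂ) → ℂ) (N : ℕ) : Prop :=
  ∃ L : Submodule ℂ (ℝ → ℂ), (∀ f ∈ L, IsTestFun f) ∧
    Module.finrank ℂ L = N ∧ ∀ f ∈ L, f ≠ 0 → 0 < Q f

/-- There is an `N`-dimensional subspace of test functions on which `Q` is strictly negative. -/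
def negSubspace (Q : (ℝ → ℂ) → ℂ) (N : ℕ) : Prop :=
  ∃ L : Submodule ℂ (ℝ → ℂ), (∀ f ∈ L, IsTestFun f) ∧
    Module.finrank ℂ L = N ∧ ∀ f ∈ L, f ≠ 0 → Q f < 0

/-- Supremum (in `ℕ∞`) of the dimensions `N` satisfying the predicate `P`. -/
def subspaceDimSup (P : ℕ → Prop) : ℕ∞ := sSup {n : ℕ∞ | ∃ N : ℕ, P N ∧ n = N}

open Polynomial in
/-- An exponential polynomial vanishing on `(0,∞)` has vanishing coefficients. -/
theorem expPoly_coeff_eq_zero {ι : Type*} [DecidableEq ι] (β : ι → ℂ) (s : Finset ι)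
    (hβ : Set.InjOn β s) (Q : ι → ℂ[X])
    (hQ : ∀ t : ℝ, 0 < t → ∑ m ∈ s, (Q m).eval (t : ℂ) * Complex.exp (β m * t) = 0) :
    ∀ m ∈ s, Q m = 0 := by
  induction s using Finset.induction_on generalizing Q with
  | empty => simp
  | insert a s ha ih =>
    have hβs : Set.InjOn β s := hβ.mono (by simp)
    have key : ∀ n : ℕ, ∀ Q : ι → ℂ[X], derivative^[n] (Q a) = 0 →
        (∀ t : ℝ, 0 < t →
          ∑ m ∈ insert a s, (Q m).eval (t : ℂ) * Complex.exp (β m * t) = 0) →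
        ∀ m ∈ s, Q m = 0 := by
      intro n
      induction n with
      | zero =>
        intro Q h0 hQ
        refine ih hβs Q fun t ht => ?_
        simpa [Finset.sum_insert ha, show Q a = 0 from h0] using hQ t ht
      | succ n ihn =>
        intro Q h0 hQ m hm
        have hR := ihn (fun m => derivative (Q m) + C (β m - β a) * Q m) (by simpa using h0)
          (fun t ht => by
            have hd : HasDerivAt
                (fun t : ℝ => ∑ m ∈ insert a s, (Q m).eval (t : ℂ) * Complex.exp (β m * t))
                (∑ m ∈ insert a s, ((derivative (Q m)).eval (t : ℂ) * Complex.exp (β m * t) +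
                  (Q m).eval (t : ℂ) * (Complex.exp (β m * t) * (β m * 1)))) t := by
              refine HasDerivAt.fun_sum fun m _ => ?_
              have h1 : HasDerivAt (fun t : ℝ => (Q m).eval (t : ℂ))
                  ((derivative (Q m)).eval (t : ℂ)) t :=
                ((Q m).hasDerivAt (t : ℂ)).comp_ofReal
              have h2 : HasDerivAt (fun t : ℝ => Complex.exp (β m * t))
                  (Complex.exp (β m * t) * (β m * 1)) t :=
                (((hasDerivAt_id (t : ℂ)).const_mul (β m)).cexp).comp_ofReal
              exact h1.mul h2
            have hz : HasDerivAt
                (fun t : ℝ => ∑ m ∈ insert a s, (Q m).eval (t : ℂ) * Complex.exp (β m * t))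
                0 t := by
              refine (hasDerivAt_const t (0 : ℂ)).congr_of_eventuallyEq ?_
              filter_upwards [lt_mem_nhds ht] with u hu using hQ u hu
            have h3 := hd.unique hz
            have h4 := hQ t ht
            calc _ = (∑ m ∈ insert a s, ((derivative (Q m)).eval (t : ℂ) * Complex.exp (β m * t) +
                  (Q m).eval (t : ℂ) * (Complex.exp (β m * t) * (β m * 1)))) -
                  β a * ∑ m ∈ insert a s, (Q m).eval (t : ℂ) * Complex.exp (β m * t) := by
                  rw [Finset.mul_sum, ← Finset.sum_sub_distrib]
                  refine Finset.sum_congr rfl fun m _ => ?_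
                  simp only [eval_add, eval_mul, eval_C]
                  ring
              _ = 0 := by rw [h3, h4]; simp) m hm
        have hne : β m - β a ≠ 0 := by
          refine sub_ne_zero.2 fun h => ha ?_
          rwa [← hβ (by simp [hm]) (by simp) h]
        by_contra hQm
        have h5 : C (β m - β a) * Q m = - derivative (Q m) := eq_neg_of_add_eq_zero_right hR
        have h6 := congrArg degree h5
        rw [degree_C_mul hne, degree_neg] at h6
        exact absurd h6 (degree_derivative_lt hQm).ne'
    have hs := key ((Q a).natDegree + 1) Q
      (iterate_derivative_eq_zero (Nat.lt_succ_self _)) hQ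
    intro m hm
    rcases Finset.mem_insert.1 hm with rfl | hm
    · refine eq_zero_of_infinite_isRoot _ ?_
      refine Set.Infinite.mono ?_
        ((Set.Ioi_infinite (0 : ℝ)).image Complex.ofReal_injective.injOn)
      rintro _ ⟨t, ht, rfl⟩
      have := hQ t ht
      rw [Finset.sum_insert ha, Finset.sum_eq_zero (fun k hk => by simp [hs k hk]), add_zero] at this
      exact (mul_eq_zero.1 this).resolve_right (Complex.exp_ne_zero _)
    · exact hs m hm

open Matrix in
/-- A nondegenerate Hermitian form is diagonalized, with nonzero real entries, by a linear change
of coordinates. -/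
theorem exists_diagonalization {ι : Type*} [Fintype ι] [DecidableEq ι] {A : Matrix ι ι ℂ}
    (hA : A.IsHermitian) (hinj : ∀ x, A *ᵥ x = 0 → x = 0) :
    ∃ (lam : ι → ℝ) (U : (ι → ℂ) →ₗ[ℂ] (ι → ℂ)), (∀ i, lam i ≠ 0) ∧ Function.Injective U ∧
      ∀ c, star (U c) ⬝ᵥ A *ᵥ (U c) = ∑ i, (lam i : ℂ) * (star (c i) * c i) := by
  set V : Matrix ι ι ℂ := (hA.eigenvectorUnitary).1 with hV
  have hVV : star V * V = 1 := Unitary.coe_star_mul_self hA.eigenvectorUnitary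
  have hsp : star V * A * V = diagonal (RCLike.ofReal ∘ hA.eigenvalues) := by
    have := hA.spectral_theorem
    rw [Unitary.conjStarAlgAut_apply] at this
    conv_lhs => rw [this]
    rw [← hV]
    calc _ = (star V * V) * diagonal (RCLike.ofReal ∘ hA.eigenvalues) * (star V * V) := by
          simp only [Matrix.mul_assoc]
      _ = _ := by rw [hVV]; simp
  refine ⟨hA.eigenvalues, V.mulVecLin, fun i h => ?_, ?_, fun c => ?_⟩
  · have h1 := hA.mulVec_eigenvectorBasis i
    rw [h] at h1
    have h2 := hinj _ (by simpa using h1)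
    have h3 := hA.eigenvectorBasis.orthonormal.ne_zero i
    apply h3
    ext j
    exact congrFun h2 j
  · intro x y hxy
    have := congrArg (fun z => star V *ᵥ z) hxy
    simpa [hVV] using this
  · simp only [mulVecLin_apply]
    rw [star_mulVec, ← dotProduct_mulVec, mulVec_mulVec, mulVec_mulVec, ← star_eq_conjTranspose,
      hsp, dotProduct]
    refine Finset.sum_congr rfl fun i _ => ?_
    simp [mulVec_diagonal]
    ring

/-- The space of test functions. -/
def testFuns : Submodule ℂ (ℝ → ℂ) where
  carrier := {f | IsTestFun f}
  zero_mem' := by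
    refine ⟨contDiff_const, HasCompactSupport.zero, ?_⟩
    simp [tsupport]
  add_mem' := by
    rintro f g ⟨hf1, hf2, hf3⟩ ⟨hg1, hg2, hg3⟩
    exact ⟨hf1.add hg1, hf2.add hg2, (tsupport_add f g).trans (Set.union_subset hf3 hg3)⟩
  smul_mem' := by
    rintro c f ⟨hf1, hf2, hf3⟩
    exact ⟨contDiff_const.smul hf1, hf2.mono (Function.support_const_smul_subset c f),
      (closure_mono (Function.support_const_smul_subset c f)).trans hf3⟩

theorem negSubspace_iff_posSubspace_neg (Q : (ℝ → ℂ) → ℂ) (N : ℕ) :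
    negSubspace Q N ↔ posSubspace (fun f => -Q f) N := by
  simp [negSubspace, posSubspace]

theorem posSubspace_le_card {ι : Type*} [Fintype ι] {Q : (ℝ → ℂ) → ℂ}
    (ell : testFuns →ₗ[ℂ] (ι → ℂ)) (p : ι → Prop) [DecidablePred p]
    (h : ∀ f, (∀ i, p i → ell f i = 0) → Q f ≤ 0)
    {N : ℕ} (hN : posSubspace Q N) : N ≤ Fintype.card {i // p i} := by
  obtain ⟨L, hL, rfl, hpos⟩ := hN
  let F : L →ₗ[ℂ] ({i // p i} → ℂ) :=
    (LinearMap.funLeft ℂ ℂ Subtype.val) ∘ₗ ell ∘ₗ Submodule.inclusion (p := L) (p' := testFuns) hL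
  have hF : Function.Injective F := by
    refine LinearMap.ker_eq_bot.1 (LinearMap.ker_eq_bot'.2 fun f hf => ?_)
    by_contra hne
    have h1 := hpos f f.2 (by simpa using hne)
    exact absurd h1 (h (Submodule.inclusion hL f) fun i hi => congrFun hf ⟨i, hi⟩).not_gt
  simpa using LinearMap.finrank_le_finrank_of_injective hF

theorem posSubspace_card_pos {ι : Type*} [Fintype ι] {Q : (ℝ → ℂ) → ℂ}
    (G : (ι → ℂ) →ₗ[ℂ] testFuns) (hG : Function.Injective G) (lam : ι → ℝ)
    (hQ : ∀ c, Q (G c) = ∑ i, (lam i : ℂ) * (star (c i) * c i)) :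
    posSubspace Q (Fintype.card {i // 0 < lam i}) := by
  classical
  let E : ({i // 0 < lam i} → ℂ) →ₗ[ℂ] (ι → ℂ) := Function.ExtendByZero.linearMap ℂ Subtype.val
  have hE : ∀ c i, E c i.1 = c i := fun c i => Subtype.val_injective.extend_apply _ _ _
  have hE0 : ∀ c i, ¬ 0 < lam i → E c i = 0 := fun c i hi =>
    Function.extend_apply' _ _ _ (by rintro ⟨j, rfl⟩; exact hi j.2)
  have hEinj : Function.Injective E := fun c d h => by
    ext i
    rw [← hE c, h, hE]
  have hinj : Function.Injective (testFuns.subtype ∘ₗ G ∘ₗ E) :=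
    testFuns.subtype_injective.comp (hG.comp hEinj)
  refine ⟨LinearMap.range (testFuns.subtype ∘ₗ G ∘ₗ E), ?_, ?_, ?_⟩
  · rintro _ ⟨c, rfl⟩
    exact (G (E c)).2
  · rw [LinearMap.finrank_range_of_inj hinj]
    simp
  · rintro _ ⟨c, rfl⟩ hne
    have hterm : ∀ i, 0 ≤ (lam i : ℂ) * (star (E c i) * E c i) := fun i => by
      by_cases hi : 0 < lam i
      · exact mul_nonneg (by exact_mod_cast hi.le) (star_mul_self_nonneg _)
      · simp [hE0 c i hi]
    have hc : c ≠ 0 := fun h => hne (by simp [h])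
    obtain ⟨i, hi⟩ := Function.ne_iff.1 hc
    change 0 < Q (G (E c))
    rw [hQ]
    refine Finset.sum_pos' (fun i _ => hterm i) ⟨i.1, Finset.mem_univ _, ?_⟩
    refine lt_of_le_of_ne (hterm i) (Ne.symm ?_)
    rw [hE]
    simpa [i.2.ne'] using hi

theorem subspaceDimSup_eq {R : ℕ → Prop} {N : ℕ} (h : R N) (hle : ∀ n, R n → n ≤ N) :
    subspaceDimSup R = N := by
  refine le_antisymm (sSup_le ?_) (le_sSup ⟨N, h, rfl⟩)
  rintro _ ⟨n, hn, rfl⟩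
  exact_mod_cast hle n hn

open Matrix in
/-- A form whose restriction to a coordinate subspace is diagonal with nonnegative entries is
nonnegative on that subspace. -/
theorem form_nonneg_of_support {ι : Type*} [Fintype ι] {A : Matrix ι ι ℂ} (p : ι → Prop)
    (hoff : ∀ i j, p i → p j → i ≠ j → A i j = 0) (hdiag : ∀ i, p i → 0 ≤ A i i)
    (x : ι → ℂ) (hx : ∀ i, ¬ p i → x i = 0) : 0 ≤ star x ⬝ᵥ A *ᵥ x := by
  simp only [dotProduct, mulVec, Finset.mul_sum]
  refine Finset.sum_nonneg fun i _ => Finset.sum_nonneg fun j _ => ?_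
  by_cases hi : p i
  · by_cases hj : p j
    · by_cases hij : i = j
      · subst hij
        have := mul_nonneg (hdiag i hi) (star_mul_self_nonneg (x i))
        convert this using 1
        simp only [Pi.star_apply]
        ring
      · simp [hoff i j hi hj hij]
    · simp [hx j hj]
  · simp [hx i hi]

open Matrix in
/-- The signature of a form on test functions that factors through a nondegenerate Hermitian
form having complementary-dimensional semidefinite coordinate subspaces. -/
theorem subspaceDimSup_of_semidefinite {ι : Type*} [Fintype ι] [DecidableEq ι]
    {Q : (ℝ → ℂ) → ℂ} (ell : testFuns →ₗ[ℂ] (ι → ℂ)) (hell : Function.Surjective ell)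
    {A : Matrix ι ι ℂ} (hA : A.IsHermitian) (hinj : ∀ x, A *ᵥ x = 0 → x = 0)
    (hQ : ∀ f : testFuns, Q f = star (ell f) ⬝ᵥ A *ᵥ ell f)
    (p q : ι → Prop) [DecidablePred p] [DecidablePred q]
    (hpoff : ∀ i j, p i → p j → i ≠ j → A i j = 0) (hpdiag : ∀ i, p i → 0 ≤ A i i)
    (hqoff : ∀ i j, q i → q j → i ≠ j → A i j = 0) (hqdiag : ∀ i, q i → A i i ≤ 0)
    (hcard : Fintype.card {i // p i} + Fintype.card {i // q i} = Fintype.card ι) :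
    subspaceDimSup (posSubspace Q) = Fintype.card {i // p i} ∧
      subspaceDimSup (negSubspace Q) = Fintype.card {i // q i} := by
  obtain ⟨lam, U, hlam, hU, hUA⟩ := exists_diagonalization hA hinj
  obtain ⟨S, hS⟩ := ell.exists_rightInverse_of_surjective (LinearMap.range_eq_top.2 hell)
  have hS' : ∀ x, ell (S x) = x := fun x => LinearMap.congr_fun hS x
  have hG : Function.Injective (S ∘ₗ U) := by
    intro c d h
    apply hU
    rw [← hS' (U c), ← hS' (U d)]
    exact congrArg ell h
  have hnp : Fintype.card {i // ¬ p i} = Fintype.card {i // q i} := by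
    rw [Fintype.card_subtype_compl]; omega
  have hnq : Fintype.card {i // ¬ q i} = Fintype.card {i // p i} := by
    rw [Fintype.card_subtype_compl]; omega
  have hupP : ∀ n, posSubspace Q n → n ≤ Fintype.card {i // p i} := fun n hn => by
    rw [← hnq]
    refine posSubspace_le_card ell _ (fun f hf => ?_) hn
    have := form_nonneg_of_support (A := -A) q (fun i j hi hj hij => by simp [hqoff i j hi hj hij])
      (fun i hi => by simpa using hqdiag i hi) (ell f) hf
    rw [hQ]
    simpa [neg_mulVec] using this
  have hupN : ∀ n, negSubspace Q n → n ≤ Fintype.card {i // q i} := fun n hn => by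
    rw [negSubspace_iff_posSubspace_neg] at hn
    rw [← hnp]
    refine posSubspace_le_card ell _ (fun f hf => ?_) hn
    have := form_nonneg_of_support p hpoff hpdiag (ell f) hf
    rw [hQ]
    simpa using this
  have hP : posSubspace Q (Fintype.card {i // 0 < lam i}) :=
    posSubspace_card_pos (S ∘ₗ U) hG lam fun c => by
      rw [hQ, LinearMap.comp_apply, hS', hUA]
  have hN : negSubspace Q (Fintype.card {i // 0 < -lam i}) := by
    rw [negSubspace_iff_posSubspace_neg]
    refine posSubspace_card_pos (S ∘ₗ U) hG (fun i => -lam i) fun c => ?_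
    rw [hQ, LinearMap.comp_apply, hS', hUA]
    simp
  have hsum : Fintype.card {i // 0 < lam i} + Fintype.card {i // 0 < -lam i} =
      Fintype.card ι := by
    rw [← Fintype.card_congr (Equiv.sumCompl fun i => 0 < lam i), Fintype.card_sum]
    congr 1
    refine Fintype.card_congr (Equiv.subtypeEquivRight fun i => ?_)
    rw [neg_pos, not_lt]
    exact ⟨le_of_lt, fun h => lt_of_le_of_ne h (hlam i)⟩
  have h1 := hupP _ hP
  have h2 := hupN _ hN
  have h3 : Fintype.card {i // 0 < lam i} = Fintype.card {i // p i} := by omega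
  have h4 : Fintype.card {i // 0 < -lam i} = Fintype.card {i // q i} := by omega
  exact ⟨subspaceDimSup_eq (h3 ▸ hP) hupP, subspaceDimSup_eq (h4 ▸ hN) hupN⟩

theorem IsTestFun.integrableOn_mul {f : ℝ → ℂ} (hf : IsTestFun f) {g : ℝ → ℂ}
    (hg : Continuous g) : IntegrableOn (fun t => g t * f t) (Set.Ioi 0) :=
  ((hg.mul hf.1.continuous).integrable_of_hasCompactSupport hf.2.1.mul_left).integrableOn

theorem continuous_pow_mul_exp (β : ℂ) (j : ℕ) :
    Continuous fun t : ℝ => (t : ℂ) ^ j * Complex.exp (-β * t) := by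
  fun_prop

/-- The functional `f ↦ ∫₀^∞ t^j e^{-βt} f(t) dt` on test functions. -/
def expMoment (β : ℂ) (j : ℕ) : testFuns →ₗ[ℂ] ℂ where
  toFun f := ∫ t in Set.Ioi (0:ℝ), (t : ℂ) ^ j * Complex.exp (-β * t) * f.1 t
  map_add' f g := by
    rw [← integral_add (f.2.integrableOn_mul (continuous_pow_mul_exp β j))
      (g.2.integrableOn_mul (continuous_pow_mul_exp β j))]
    simp [mul_add]
  map_smul' c f := by
    rw [RingHom.id_apply, smul_eq_mul, ← integral_const_mul]
    simp [mul_left_comm]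

theorem expMoment_apply (β : ℂ) (j : ℕ) (f : testFuns) :
    expMoment β j f = ∫ t in Set.Ioi (0:ℝ), (t : ℂ) ^ j * Complex.exp (-β * t) * f.1 t := rfl

/-- Indices `(m, j)` with `m < M` and `j ≤ K m`. -/
abbrev MomentIdx (M : ℕ) (K : ℕ → ℕ) := Σ m : Fin M, Fin (K m + 1)

theorem sum_momentIdx {R : Type*} [AddCommMonoid R] (M : ℕ) (K : ℕ → ℕ) (F : ℕ → ℕ → R) :
    ∑ i : MomentIdx M K, F i.1 i.2 =
      ∑ m ∈ Finset.range M, ∑ j ∈ Finset.range (K m + 1), F m j := by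
  rw [Fintype.sum_sigma, Finset.sum_range]
  exact Finset.sum_congr rfl fun m _ => (Finset.sum_range (F m)).symm

/-- The vector of all moments of a test function. -/
def momentMap (M : ℕ) (K : ℕ → ℕ) (α : ℕ → ℂ) : testFuns →ₗ[ℂ] (MomentIdx M K → ℂ) :=
  LinearMap.pi fun i => expMoment (α i.1) i.2

open Polynomial in
theorem momentMap_surjective (M : ℕ) (K : ℕ → ℕ) (α : ℕ → ℂ)
    (hα : ∀ m < M, ∀ n < M, m ≠ n → α m ≠ α n) : Function.Surjective (momentMap M K α) := by
  classical
  rw [← LinearMap.range_eq_top]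
  by_contra hne
  obtain ⟨φ, hφ, hle⟩ := Submodule.exists_le_ker_of_lt_top _ (lt_top_iff_ne_top.2 hne)
  apply hφ
  set w : MomentIdx M K → ℂ := fun i => φ (Pi.single i 1) with hw
  have hφw : ∀ x, φ x = ∑ i, w i * x i := fun x => by
    conv_lhs => rw [← Finset.univ_sum_single x, map_sum]
    refine Finset.sum_congr rfl fun i _ => ?_
    rw [hw, mul_comm, ← smul_eq_mul, ← map_smul, ← Pi.single_smul]
    simp
  set g : ℝ → ℂ := fun t => ∑ i : MomentIdx M K,
    w i * ((t : ℂ) ^ (i.2 : ℕ) * Complex.exp (-α i.1 * t)) with hg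
  have hgc : Continuous g := by fun_prop
  have hae := isOpen_Ioi (a := (0:ℝ)).ae_eq_zero_of_integral_contDiff_smul_eq_zero
    (f := g) (μ := volume) (hgc.locallyIntegrable.locallyIntegrableOn _) (fun u hu1 hu2 hu3 => by
      have hts : tsupport (fun t => (u t : ℂ)) ⊆ tsupport u :=
        closure_mono fun t ht => by simpa using ht
      have huT : IsTestFun fun t => (u t : ℂ) :=
        ⟨Complex.ofRealCLM.contDiff.comp hu1, hu2.comp_left (g := Complex.ofReal) rfl,
          hts.trans hu3⟩
      have h0 : φ (momentMap M K α ⟨_, huT⟩) = 0 := hle ⟨_, rfl⟩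
      rw [← setIntegral_eq_integral_of_forall_compl_eq_zero (s := Set.Ioi (0:ℝ))
        (fun t ht => by
          rw [image_eq_zero_of_notMem_tsupport (fun h => ht (hu3 h)), zero_smul])]
      rw [← h0, hφw]
      simp only [momentMap, LinearMap.pi_apply, expMoment_apply, ← integral_const_mul]
      rw [← integral_finsetSum _ fun i _ =>
        ((huT.integrableOn_mul (continuous_pow_mul_exp _ _)).const_mul _)]
      refine integral_congr_ae (Filter.Eventually.of_forall fun t => ?_)
      simp only [hg, Complex.real_smul, Finset.mul_sum]
      refine Finset.sum_congr rfl fun i _ => ?_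
      ring)
  have hg0 : Set.EqOn g (fun _ => 0) (Set.Ioi 0) :=
    Measure.eqOn_open_of_ae_eq ((ae_restrict_iff' measurableSet_Ioi).2 hae) isOpen_Ioi
      hgc.continuousOn continuousOn_const
  have hz := expPoly_coeff_eq_zero (fun m : Fin M => -α m) Finset.univ
    (fun m _ n _ h => by
      by_contra hmn
      exact hα m m.2 n n.2 (fun h' => hmn (Fin.ext h')) (neg_injective h))
    (fun m => ∑ j : Fin (K m + 1), C (w ⟨m, j⟩) * X ^ (j : ℕ)) (fun t ht => by
      refine Eq.trans ?_ (hg0 ht)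
      simp only [hg]
      rw [Fintype.sum_sigma]
      refine Finset.sum_congr rfl fun m _ => ?_
      rw [eval_finsetSum, Finset.sum_mul]
      refine Finset.sum_congr rfl fun j _ => ?_
      simp [mul_assoc])
  have hw0 : ∀ i, w i = 0 := fun ⟨m, j⟩ => by
    have := congrArg (fun q => q.coeff (j : ℕ)) (hz m (Finset.mem_univ _))
    simpa [finsetSum_coeff, coeff_X_pow, Fin.val_inj] using this
  ext i
  simpa using hw0 i

/-- The coefficient of `t^j s^k` in `P(t+s)`. -/
def binomCoeff (P : Polynomial ℂ) (j k : ℕ) : ℂ := ((j + k).choose j : ℂ) * P.coeff (j + k)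

theorem eval_add_eq_sum_binomCoeff (P : Polynomial ℂ) (t s : ℂ) :
    P.eval (t + s) = ∑ k ∈ Finset.range (P.natDegree + 1), ∑ j ∈ Finset.range (P.natDegree + 1),
      binomCoeff P j k * t ^ j * s ^ k := by
  rw [Finset.sum_comm, ← Polynomial.taylor_eval, Polynomial.eval_eq_sum_range,
    Polynomial.natDegree_taylor]
  refine Finset.sum_congr rfl fun j _ => ?_
  rw [Polynomial.taylor_coeff, Polynomial.eval_eq_sum_range' (n := P.natDegree + 1)
    (by have := P.natDegree_hasseDeriv_le j; omega), Finset.sum_mul]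
  refine Finset.sum_congr rfl fun k _ => ?_
  rw [Polynomial.hasseDeriv_coeff, binomCoeff, add_comm k j]
  ring

theorem hankelQF_expPoly (M : ℕ) (α : ℕ → ℂ) (P : ℕ → Polynomial ℂ) (f : testFuns) :
    hankelQF (fun t : ℝ => ∑ m ∈ Finset.range M,
        (P m).eval (t : ℂ) * Complex.exp (-(α m) * t)) f =
      ∑ m ∈ Finset.range M, ∑ k ∈ Finset.range ((P m).natDegree + 1),
        ∑ j ∈ Finset.range ((P m).natDegree + 1), binomCoeff (P m) j k * expMoment (α m) k f *
          (starRingEnd ℂ) (expMoment ((starRingEnd ℂ) (α m)) j f) := by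
  set u : ℕ → ℕ → ℝ → ℂ := fun m j t => (t : ℂ) ^ j * Complex.exp (-(α m) * t) with hu
  have huc : ∀ m j, Continuous (u m j) := fun m j => continuous_pow_mul_exp _ _
  have hf := f.2
  have hfc : IsTestFun fun t => (starRingEnd ℂ) (f.1 t) :=
    ⟨Complex.conjCLE.contDiff.comp hf.1, hf.2.1.comp_left (map_zero _),
      (closure_mono fun t ht => by simpa using ht).trans hf.2.2⟩
  have hconj : ∀ m j, (starRingEnd ℂ) (expMoment ((starRingEnd ℂ) (α m)) j f) =
      ∫ t in Set.Ioi (0:ℝ), u m j t * (starRingEnd ℂ) (f.1 t) := fun m j => by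
    rw [expMoment_apply, ← integral_conj]
    refine integral_congr_ae (Filter.Eventually.of_forall fun t => ?_)
    simp [hu, ← Complex.exp_conj]
  have hker : ∀ t s : ℝ, (∑ m ∈ Finset.range M, (P m).eval ((t + s : ℝ) : ℂ) *
        Complex.exp (-(α m) * (t + s : ℝ))) * f.1 s * (starRingEnd ℂ) (f.1 t) =
      ∑ m ∈ Finset.range M, ∑ k ∈ Finset.range ((P m).natDegree + 1),
        ∑ j ∈ Finset.range ((P m).natDegree + 1),
          (binomCoeff (P m) j k * (u m j t * (starRingEnd ℂ) (f.1 t))) * (u m k s * f.1 s) := by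
    intro t s
    rw [mul_assoc, Finset.sum_mul]
    refine Finset.sum_congr rfl fun m _ => ?_
    rw [Complex.ofReal_add, eval_add_eq_sum_binomCoeff, mul_add, Complex.exp_add, Finset.sum_mul,
      Finset.sum_mul]
    refine Finset.sum_congr rfl fun k _ => ?_
    rw [Finset.sum_mul, Finset.sum_mul]
    refine Finset.sum_congr rfl fun j _ => ?_
    simp only [hu]
    ring
  have hint : ∀ m k (c : ℂ),
      Integrable (fun s => c * (u m k s * f.1 s)) (volume.restrict (Set.Ioi 0)) :=
    fun m k c => (hf.integrableOn_mul (huc m k)).const_mul c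
  have hint' : ∀ m j (b c : ℂ), Integrable
      (fun t => b * (u m j t * (starRingEnd ℂ) (f.1 t)) * c) (volume.restrict (Set.Ioi 0)) :=
    fun m j b c => ((hfc.integrableOn_mul (huc m j)).const_mul b).mul_const c
  have hinner : ∀ t : ℝ, (∫ s in Set.Ioi (0:ℝ), (∑ m ∈ Finset.range M,
        (P m).eval ((t + s : ℝ) : ℂ) *
        Complex.exp (-(α m) * (t + s : ℝ))) * f.1 s * (starRingEnd ℂ) (f.1 t)) =
      ∑ m ∈ Finset.range M, ∑ k ∈ Finset.range ((P m).natDegree + 1),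
        ∑ j ∈ Finset.range ((P m).natDegree + 1),
          (binomCoeff (P m) j k * (u m j t * (starRingEnd ℂ) (f.1 t))) * expMoment (α m) k f := by
    intro t
    simp_rw [hker]
    rw [integral_finsetSum _ fun m _ => integrable_finsetSum _ fun k _ =>
      integrable_finsetSum _ fun j _ => hint m k _]
    refine Finset.sum_congr rfl fun m _ => ?_
    rw [integral_finsetSum _ fun k _ => integrable_finsetSum _ fun j _ => hint m k _]
    refine Finset.sum_congr rfl fun k _ => ?_
    rw [integral_finsetSum _ fun j _ => hint m k _]
    refine Finset.sum_congr rfl fun j _ => ?_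
    rw [integral_const_mul, expMoment_apply]
  rw [hankelQF]
  simp_rw [hinner]
  rw [integral_finsetSum _ fun m _ => integrable_finsetSum _ fun k _ =>
    integrable_finsetSum _ fun j _ => hint' m j _ _]
  refine Finset.sum_congr rfl fun m _ => ?_
  rw [integral_finsetSum _ fun k _ => integrable_finsetSum _ fun j _ => hint' m j _ _]
  refine Finset.sum_congr rfl fun k _ => ?_
  rw [integral_finsetSum _ fun j _ => hint' m j _ _]
  refine Finset.sum_congr rfl fun j _ => ?_
  rw [integral_mul_const, integral_const_mul, hconj]
  ring

theorem binomCoeff_eq_zero {P : Polynomial ℂ} {j k : ℕ} (h : P.natDegree < j + k) :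
    binomCoeff P j k = 0 := by
  rw [binomCoeff, Polynomial.coeff_eq_zero_of_natDegree_lt h, mul_zero]

theorem star_binomCoeff {p q : Polynomial ℂ}
    (h : ∀ j, q.coeff j = (starRingEnd ℂ) (p.coeff j)) (j k : ℕ) :
    star (binomCoeff q j k) = binomCoeff p k j := by
  rw [binomCoeff, binomCoeff, h, add_comm k j, Nat.choose_symm_add]
  simp

/-- The matrix of the Hankel form in the coordinates given by the moments; `σ` pairs each
exponent with its complex conjugate. -/
def hankelMatrix (M : ℕ) (σ : ℕ → ℕ) (P : ℕ → Polynomial ℂ) :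
    Matrix (MomentIdx M fun m => (P m).natDegree) (MomentIdx M fun m => (P m).natDegree) ℂ :=
  Matrix.of fun i i' => if (i.1 : ℕ) = σ i'.1 then binomCoeff (P i'.1) i.2 i'.2 else 0

section hankelMatrix

variable {M : ℕ} {σ : ℕ → ℕ} {P : ℕ → Polynomial ℂ}

theorem hankelMatrix_apply (i i' : MomentIdx M fun m => (P m).natDegree) :
    hankelMatrix M σ P i i' =
      if (i.1 : ℕ) = σ i'.1 then binomCoeff (P i'.1) i.2 i'.2 else 0 := rfl

theorem natDegree_eq_of_coeff_conj {p q : Polynomial ℂ}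
    (h : ∀ j, q.coeff j = (starRingEnd ℂ) (p.coeff j)) : q.natDegree = p.natDegree := by
  have : q = p.map (starRingEnd ℂ) := by
    ext j
    rw [h, Polynomial.coeff_map]
  rw [this, Polynomial.natDegree_map]

theorem hankelMatrix_isHermitian (hσσ : ∀ m < M, σ (σ m) = m)
    (hP : ∀ m < M, ∀ j, (P (σ m)).coeff j = (starRingEnd ℂ) ((P m).coeff j)) :
    (hankelMatrix M σ P).IsHermitian := by
  ext i i'
  rw [Matrix.conjTranspose_apply]
  by_cases h : (i.1 : ℕ) = σ i'.1
  · have h' : (i'.1 : ℕ) = σ i.1 := by rw [h, hσσ _ i'.1.2]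
    rw [hankelMatrix_apply, if_pos h', hankelMatrix_apply, if_pos h]
    exact star_binomCoeff (fun j => by rw [h, hP _ i'.1.2]) _ _
  · have h' : ¬ (i'.1 : ℕ) = σ i.1 := fun h' => h (by rw [h', hσσ _ i.1.2])
    rw [hankelMatrix_apply, if_neg h', hankelMatrix_apply, if_neg h, star_zero]

open Matrix in
theorem hankelMatrix_mulVec_injective (hσ : ∀ m < M, σ m < M) (hσσ : ∀ m < M, σ (σ m) = m)
    (hP : ∀ m < M, ∀ j, (P (σ m)).coeff j = (starRingEnd ℂ) ((P m).coeff j))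
    (hne : ∀ m < M, P m ≠ 0) (x : MomentIdx M (fun m => (P m).natDegree) → ℂ)
    (hx : hankelMatrix M σ P *ᵥ x = 0) : x = 0 := by
  suffices h : ∀ (k : ℕ) (m : Fin M) (hk : k < (P m).natDegree + 1), x ⟨m, ⟨k, hk⟩⟩ = 0 by
    ext ⟨m, k⟩
    exact h k m k.2
  intro k
  induction k using Nat.strong_induction_on with
  | _ k ih =>
    intro m hk
    have hdeg := natDegree_eq_of_coeff_conj (hP m m.2)
    have hrow := congrFun hx
      ⟨⟨σ m, hσ m m.2⟩, ⟨(P m).natDegree - k, by dsimp only; rw [hdeg]; omega⟩⟩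
    rw [mulVec, dotProduct, Finset.sum_eq_single ⟨m, ⟨k, hk⟩⟩] at hrow
    · rw [hankelMatrix_apply, if_pos rfl] at hrow
      refine (mul_eq_zero.1 hrow).resolve_left ?_
      have hsum : (P m).natDegree - k + k = (P m).natDegree := by omega
      rw [binomCoeff]
      dsimp only
      rw [hsum]
      refine mul_ne_zero ?_ (Polynomial.leadingCoeff_ne_zero.2 (hne m m.2))
      exact_mod_cast (Nat.choose_pos (Nat.sub_le _ _)).ne'
    · rintro ⟨m', k'⟩ - hne'
      by_cases hm : σ m = σ m'
      · have hmm : m = m' := Fin.ext (by rw [← hσσ m m.2, hm, hσσ m' m'.2])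
        subst hmm
        rcases lt_trichotomy (k' : ℕ) k with hlt | heq | hgt
        · rw [ih k' hlt m k'.2, mul_zero]
        · exact absurd (by subst heq; rfl) hne'
        · rw [hankelMatrix_apply, if_pos rfl, binomCoeff_eq_zero (by dsimp only; omega), zero_mul]
      · rw [hankelMatrix_apply, if_neg hm, zero_mul]
    · simp

open Matrix in
theorem hankelQF_eq_hankelMatrix (α : ℕ → ℂ) (hσ : ∀ m < M, σ m < M)
    (hα : ∀ m < M, α (σ m) = (starRingEnd ℂ) (α m))
    (hP : ∀ m < M, ∀ j, (P (σ m)).coeff j = (starRingEnd ℂ) ((P m).coeff j)) (f : testFuns) :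
    hankelQF (fun t : ℝ => ∑ m ∈ Finset.range M,
        (P m).eval (t : ℂ) * Complex.exp (-(α m) * t)) f =
      star (momentMap M (fun m => (P m).natDegree) α f) ⬝ᵥ
        hankelMatrix M σ P *ᵥ momentMap M (fun m => (P m).natDegree) α f := by
  rw [hankelQF_expPoly]
  simp only [dotProduct, mulVec, Finset.mul_sum]
  rw [Finset.sum_comm]
  simp only [hankelMatrix_apply, momentMap, LinearMap.pi_apply, Pi.star_apply]
  rw [sum_momentIdx M (fun m => (P m).natDegree) fun m k =>
    ∑ i : MomentIdx M (fun m => (P m).natDegree), star (expMoment (α i.1) i.2 f) *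
      ((if (i.1 : ℕ) = σ m then binomCoeff (P m) i.2 k else 0) * expMoment (α m) k f)]
  refine Finset.sum_congr rfl fun m hm => Finset.sum_congr rfl fun k _ => ?_
  have hm := Finset.mem_range.1 hm
  rw [sum_momentIdx M (fun m => (P m).natDegree) fun m' j =>
    star (expMoment (α m') j f) *
      ((if m' = σ m then binomCoeff (P m) j k else 0) * expMoment (α m) k f)]
  refine Eq.trans ?_ (Finset.sum_eq_single (σ m) ?_ ?_).symm
  · rw [natDegree_eq_of_coeff_conj (hP m hm), ← hα m hm]
    refine Finset.sum_congr rfl fun j _ => ?_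
    rw [if_pos rfl, mul_comm, starRingEnd_apply]
  · intro m' _ hm'
    simp [hm']
  · intro h
    exact absurd (Finset.mem_range.2 (hσ m hm)) h

end hankelMatrix

/-- The coordinates spanning a semidefinite subspace: those above the middle degree (the middle
one being included according to `b`) for the first `M₀` exponents, all of them for the next `M₁`. -/
def coordPred (M₀ M₁ : ℕ) (K : ℕ → ℕ) (b : ℕ → Prop) (m j : ℕ) : Prop :=
  if m < M₀ then K m < 2 * j ∨ (2 * j = K m ∧ b m) else m < M₀ + M₁

/-- The pairing of each exponent with its complex conjugate. -/
def conjIdx (M₀ M₁ m : ℕ) : ℕ :=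
  if m < M₀ then m else if m < M₀ + M₁ then m + M₁ else m - M₁

theorem sum_range_upper_half (K : ℕ) (b : Prop) [Decidable b] :
    (∑ j ∈ Finset.range (K + 1), if K < 2 * j ∨ (2 * j = K ∧ b) then 1 else 0) =
      if K % 2 = 1 then (K + 1) / 2 else if b then K / 2 + 1 else K / 2 := by
  rw [← Finset.card_filter]
  have : (Finset.range (K + 1)).filter (fun j => K < 2 * j ∨ (2 * j = K ∧ b)) =
      Finset.Ico (if b then (K + 1) / 2 else K / 2 + 1) (K + 1) := by
    ext j
    by_cases hb : b <;> simp [hb] <;> omega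
  rw [this, Nat.card_Ico]
  split_ifs <;> omega

open scoped Classical in
theorem card_coordPred (M₀ M₁ : ℕ) (K : ℕ → ℕ) (b : ℕ → Prop) :
    Fintype.card {i : MomentIdx (M₀ + 2 * M₁) K // coordPred M₀ M₁ K b i.1 i.2} =
      (∑ m ∈ Finset.range M₀,
        if K m % 2 = 1 then (K m + 1) / 2 else if b m then K m / 2 + 1 else K m / 2) +
      ∑ m ∈ Finset.Ico M₀ (M₀ + M₁), (K m + 1) := by
  rw [Fintype.card_subtype, Finset.card_filter,
    sum_momentIdx _ K fun m j => if coordPred M₀ M₁ K b m j then 1 else 0,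
    ← Finset.sum_range_add_sum_Ico _ (show M₀ ≤ M₀ + 2 * M₁ by omega),
    ← Finset.sum_Ico_consecutive _ (show M₀ ≤ M₀ + M₁ by omega)
      (show M₀ + M₁ ≤ M₀ + 2 * M₁ by omega)]
  congr 1
  · refine Finset.sum_congr rfl fun m hm => ?_
    simp only [coordPred, if_pos (Finset.mem_range.1 hm)]
    exact sum_range_upper_half _ _
  · rw [Finset.sum_eq_zero (s := Finset.Ico (M₀ + M₁) (M₀ + 2 * M₁)), add_zero]
    · refine Finset.sum_congr rfl fun m hm => ?_
      have := Finset.mem_Ico.1 hm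
      simp [coordPred, show ¬ m < M₀ by omega, this.2]
    · intro m hm
      have := Finset.mem_Ico.1 hm
      simp [coordPred, show ¬ m < M₀ by omega, show ¬ m < M₀ + M₁ by omega]

theorem card_momentIdx (M₀ M₁ : ℕ) (K : ℕ → ℕ)
    (hK : ∀ m, M₀ ≤ m → m < M₀ + M₁ → K (m + M₁) = K m) :
    Fintype.card (MomentIdx (M₀ + 2 * M₁) K) = ∑ m ∈ Finset.range M₀, (K m + 1) +
      2 * ∑ m ∈ Finset.Ico M₀ (M₀ + M₁), (K m + 1) := by
  rw [Fintype.card_eq_sum_ones, sum_momentIdx _ K fun _ _ => 1,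
    ← Finset.sum_range_add_sum_Ico _ (show M₀ ≤ M₀ + 2 * M₁ by omega),
    ← Finset.sum_Ico_consecutive _ (show M₀ ≤ M₀ + M₁ by omega)
      (show M₀ + M₁ ≤ M₀ + 2 * M₁ by omega), show M₀ + 2 * M₁ = M₀ + M₁ + M₁ by omega,
    ← Finset.sum_Ico_add' _ M₀ (M₀ + M₁) M₁, two_mul]
  simp only [Finset.sum_const, Finset.card_range, smul_eq_mul, mul_one]
  congr 2
  refine Finset.sum_congr rfl fun m hm => ?_
  have := Finset.mem_Ico.1 hm
  rw [hK m this.1 this.2]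

theorem hankelMatrix_off_diag {M M₀ M₁ : ℕ} {P : ℕ → Polynomial ℂ} {b : ℕ → Prop}
    (i j : MomentIdx M fun m => (P m).natDegree)
    (hi : coordPred M₀ M₁ (fun m => (P m).natDegree) b i.1 i.2)
    (hj : coordPred M₀ M₁ (fun m => (P m).natDegree) b j.1 j.2) (hij : i ≠ j) :
    hankelMatrix M (conjIdx M₀ M₁) P i j = 0 := by
  obtain ⟨m, k⟩ := i
  obtain ⟨n, l⟩ := j
  rw [hankelMatrix_apply]
  split_ifs with h
  · dsimp only at h hi hj ⊢
    by_cases hn : (n : ℕ) < M₀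
    · have hmn : m = n := Fin.ext (by rw [h, conjIdx, if_pos hn])
      subst hmn
      have hkl : (k : ℕ) ≠ l := fun hkl => hij (by rw [Fin.ext hkl])
      rw [coordPred, if_pos hn] at hi hj
      exact binomCoeff_eq_zero (by omega)
    · rw [coordPred, if_neg hn] at hj
      rw [conjIdx, if_neg hn, if_pos hj] at h
      rw [coordPred] at hi
      split_ifs at hi <;> omega
  · rfl

/-- A diagonal entry is zero, or a positive multiple of the leading coefficient of a
polynomial attached to a real exponent. -/
theorem hankelMatrix_diag {M M₀ M₁ : ℕ} {P : ℕ → Polynomial ℂ} {b : ℕ → Prop}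
    (i : MomentIdx M fun m => (P m).natDegree)
    (hi : coordPred M₀ M₁ (fun m => (P m).natDegree) b i.1 i.2) :
    hankelMatrix M (conjIdx M₀ M₁) P i i = 0 ∨ ((i.1 : ℕ) < M₀ ∧ b i.1 ∧
      ∃ c : ℕ, hankelMatrix M (conjIdx M₀ M₁) P i i = c * (P i.1).leadingCoeff) := by
  obtain ⟨m, k⟩ := i
  rw [hankelMatrix_apply]
  split_ifs with h
  · dsimp only at h hi ⊢
    by_cases hm : (m : ℕ) < M₀
    · rw [coordPred, if_pos hm] at hi
      rcases hi with hi | ⟨hi, hb⟩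
      · exact Or.inl (binomCoeff_eq_zero (by omega))
      · refine Or.inr ⟨hm, hb, ((k : ℕ) + k).choose k, ?_⟩
        rw [binomCoeff, Polynomial.leadingCoeff, ← two_mul]
        congr 2
    · rw [coordPred, if_neg hm] at hi
      rw [conjIdx, if_neg hm, if_pos hi] at h
      omega
  · exact Or.inl rfl

/-- Numbers of positive and negative eigenvalues of a finite-rank Hankel operator with kernel
`h(t) = Σ_{m=1}^{M} P_m(t) e^{-α_m t}`, `M = M₀ + 2M₁` (indices `0,…,M₀-1` real,
indices `M₀,…,M₀+M₁-1` in the upper half-plane, indices `M₀+M₁,…,M-1` their conjugates). -/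
theorem finite_rank_hankel_signature (M₀ M₁ : ℕ) (hM : 1 ≤ M₀ + 2 * M₁)
    (α : ℕ → ℂ) (P : ℕ → Polynomial ℂ)
    (hdist : ∀ m < M₀ + 2 * M₁, ∀ n < M₀ + 2 * M₁, m ≠ n → α m ≠ α n)
    (hre : ∀ m < M₀ + 2 * M₁, 0 < (α m).re)
    (hαreal : ∀ m < M₀, (α m).im = 0)
    (hαim : ∀ m, M₀ ≤ m → m < M₀ + M₁ → 0 < (α m).im)
    (hαconj : ∀ m, M₀ ≤ m → m < M₀ + M₁ → α (m + M₁) = (starRingEnd ℂ) (α m))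
    (hPne : ∀ m < M₀ + 2 * M₁, P m ≠ 0)
    (hPreal : ∀ m < M₀, ∀ j, ((P m).coeff j).im = 0)
    (hPconj : ∀ m, M₀ ≤ m → m < M₀ + M₁ →
      ∀ j, (P (m + M₁)).coeff j = (starRingEnd ℂ) ((P m).coeff j))
    (Np Nm : ℕ → ℕ)
    (hNp : ∀ m < M₀, Np m =
      if (P m).natDegree % 2 = 1 then ((P m).natDegree + 1) / 2
      else if 0 < ((P m).leadingCoeff).re then (P m).natDegree / 2 + 1
      else (P m).natDegree / 2)
    (hNm : ∀ m < M₀, Nm m =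
      if (P m).natDegree % 2 = 1 then ((P m).natDegree + 1) / 2
      else if 0 < ((P m).leadingCoeff).re then (P m).natDegree / 2
      else (P m).natDegree / 2 + 1) :
    subspaceDimSup (posSubspace (hankelQF (fun t : ℝ =>
        ∑ m ∈ Finset.range (M₀ + 2 * M₁), (P m).eval (t : ℂ) * Complex.exp (-(α m) * t)))) =
      ((∑ m ∈ Finset.range M₀, Np m
        + ∑ m ∈ Finset.Ico M₀ (M₀ + M₁), ((P m).natDegree + 1) : ℕ) : ℕ∞)
    ∧ subspaceDimSup (negSubspace (hankelQF (fun t : ℝ =>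
        ∑ m ∈ Finset.range (M₀ + 2 * M₁), (P m).eval (t : ℂ) * Complex.exp (-(α m) * t)))) =
      ((∑ m ∈ Finset.range M₀, Nm m
        + ∑ m ∈ Finset.Ico M₀ (M₀ + M₁), ((P m).natDegree + 1) : ℕ) : ℕ∞) := by
  classical
  have hσ : ∀ m < M₀ + 2 * M₁, conjIdx M₀ M₁ m < M₀ + 2 * M₁ := fun m hm => by
    unfold conjIdx; split_ifs <;> omega
  have hσσ : ∀ m < M₀ + 2 * M₁, conjIdx M₀ M₁ (conjIdx M₀ M₁ m) = m := fun m hm => by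
    unfold conjIdx; split_ifs <;> omega
  have hα : ∀ m < M₀ + 2 * M₁, α (conjIdx M₀ M₁ m) = (starRingEnd ℂ) (α m) := fun m hm => by
    unfold conjIdx
    split_ifs with h1 h2
    · exact (Complex.conj_eq_iff_im.2 (hαreal m h1)).symm
    · exact hαconj m (by omega) h2
    · have := hαconj (m - M₁) (by omega) (by omega)
      rw [Nat.sub_add_cancel (by omega)] at this
      rw [this, Complex.conj_conj]
  have hP : ∀ m < M₀ + 2 * M₁, ∀ j,
      (P (conjIdx M₀ M₁ m)).coeff j = (starRingEnd ℂ) ((P m).coeff j) := fun m hm j => by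
    unfold conjIdx
    split_ifs with h1 h2
    · exact (Complex.conj_eq_iff_im.2 (hPreal m h1 j)).symm
    · exact hPconj m (by omega) h2 j
    · have := hPconj (m - M₁) (by omega) (by omega) j
      rw [Nat.sub_add_cancel (by omega)] at this
      rw [this, Complex.conj_conj]
  set K : ℕ → ℕ := fun m => (P m).natDegree with hK
  have hcp : Fintype.card {i : MomentIdx (M₀ + 2 * M₁) K //
        coordPred M₀ M₁ K (fun m => 0 < ((P m).leadingCoeff).re) i.1 i.2} =
      ∑ m ∈ Finset.range M₀, Np m + ∑ m ∈ Finset.Ico M₀ (M₀ + M₁), (K m + 1) := by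
    rw [card_coordPred]
    congr 1
    refine Finset.sum_congr rfl fun m hm => ?_
    rw [hNp m (Finset.mem_range.1 hm)]
  have hcq : Fintype.card {i : MomentIdx (M₀ + 2 * M₁) K //
        coordPred M₀ M₁ K (fun m => ¬ 0 < ((P m).leadingCoeff).re) i.1 i.2} =
      ∑ m ∈ Finset.range M₀, Nm m + ∑ m ∈ Finset.Ico M₀ (M₀ + M₁), (K m + 1) := by
    rw [card_coordPred]
    congr 1
    refine Finset.sum_congr rfl fun m hm => ?_
    simp only [hNm m (Finset.mem_range.1 hm), ite_not, hK]
  have htot : ∑ m ∈ Finset.range M₀, Np m + ∑ m ∈ Finset.range M₀, Nm m =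
      ∑ m ∈ Finset.range M₀, (K m + 1) := by
    rw [← Finset.sum_add_distrib]
    refine Finset.sum_congr rfl fun m hm => ?_
    rw [hNp m (Finset.mem_range.1 hm), hNm m (Finset.mem_range.1 hm)]
    simp only [hK]
    split_ifs <;> omega
  have hreal : ∀ m < M₀, ((P m).leadingCoeff).im = 0 := fun m hm => hPreal m hm _
  have hmain := subspaceDimSup_of_semidefinite
    (momentMap (M₀ + 2 * M₁) K α) (momentMap_surjective _ _ _ hdist)
    (hankelMatrix_isHermitian hσσ hP) (hankelMatrix_mulVec_injective hσ hσσ hP hPne)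
    (hankelQF_eq_hankelMatrix α hσ hα hP)
    (fun i => coordPred M₀ M₁ K (fun m => 0 < ((P m).leadingCoeff).re) i.1 i.2)
    (fun i => coordPred M₀ M₁ K (fun m => ¬ 0 < ((P m).leadingCoeff).re) i.1 i.2)
    hankelMatrix_off_diag
    (fun i hi => by
      rcases hankelMatrix_diag i hi with h | ⟨hm, hb, c, h⟩
      · exact h.ge
      · rw [h]
        exact mul_nonneg (Nat.cast_nonneg c) (Complex.nonneg_iff.2 ⟨hb.le, (hreal _ hm).symm⟩))
    hankelMatrix_off_diag
    (fun i hi => by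
      rcases hankelMatrix_diag i hi with h | ⟨hm, hb, c, h⟩
      · exact h.le
      · rw [h]
        exact mul_nonpos_of_nonneg_of_nonpos (Nat.cast_nonneg c)
          (Complex.nonpos_iff.2 ⟨not_lt.1 hb, hreal _ hm⟩))
    (by
      rw [hcp, hcq, card_momentIdx M₀ M₁ K fun m h1 h2 =>
        natDegree_eq_of_coeff_conj (hPconj m h1 h2)]
      omega)
  rw [hcp, hcq] at hmain
  exact hmain
end
end

section
/- Let α > 0 and let k ≥ -1 be a real number, and set h(t) = t^k e^{-α t} for t > 0. If k ∈ [-1, 0], then Q_h[f] ≥ 0 for all f ∈ C_c^∞((0,∞)). If k > 0, then the form is not sign-definite: there exist f₊, f₋ ∈ C_c^∞((0,∞)) with Q_h[f₊] > 0 and Q_h[f₋] < 0. -/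
open MeasureTheory
open scoped ComplexOrder

noncomputable section

/-- Lebesgue measure on the open quadrant `(0,∞)²`. -/
abbrev quadrantVolume : Measure (ℝ × ℝ) :=
  (volume.restrict (Set.Ioi (0:ℝ))).prod (volume.restrict (Set.Ioi (0:ℝ)))

lemma ae_quadrantVolume_pos : ∀ᵐ z ∂quadrantVolume, 0 < z.1 ∧ 0 < z.2 := by
  rw [quadrantVolume, Measure.prod_restrict]
  exact ae_restrict_of_forall_mem (measurableSet_Ioi.prod measurableSet_Ioi) fun z hz => hz

lemma IsTestFun.integrable {f : ℝ → ℂ} (hf : IsTestFun f) : Integrable f :=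
  hf.1.continuous.integrable_of_hasCompactSupport hf.2.1

lemma IsTestFun.exists_pos_le {f : ℝ → ℂ} (hf : IsTestFun f) :
    ∃ δ > 0, ∀ t, f t ≠ 0 → δ ≤ t := by
  rcases (tsupport f).eq_empty_or_nonempty with h | h
  · refine ⟨1, one_pos, fun t ht => ?_⟩
    have := subset_tsupport f ht
    simp [h] at this
  · obtain ⟨δ, hδ, hmin⟩ := IsCompact.exists_isLeast hf.2.1 h
    exact ⟨δ, hf.2.2 hδ, fun t ht => hmin (subset_tsupport f ht)⟩

lemma IsTestFun.integrable_hankel {h : ℝ → ℂ} (hh : ContinuousOn h (Set.Ioi 0)) {f : ℝ → ℂ}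
    (hf : IsTestFun f) :
    Integrable (fun z : ℝ × ℝ => h (z.1 + z.2) * f z.2 * (starRingEnd ℂ) (f z.1))
      quadrantVolume := by
  set F : ℝ × ℝ → ℂ := fun z => h (z.1 + z.2) * f z.2 * (starRingEnd ℂ) (f z.1) with hF
  have hcl : tsupport F ⊆ tsupport f ×ˢ tsupport f := by
    refine closure_minimal (fun z hz => ?_) ((isClosed_tsupport f).prod (isClosed_tsupport f))
    have hz' : (h (z.1 + z.2) ≠ 0 ∧ f z.2 ≠ 0) ∧ f z.1 ≠ 0 := by
      simpa [hF, Function.mem_support] using hz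
    exact ⟨subset_tsupport f hz'.2, subset_tsupport f hz'.1.2⟩
  have hcomp : HasCompactSupport F :=
    IsCompact.of_isClosed_subset (IsCompact.prod hf.2.1 hf.2.1) (isClosed_tsupport F) hcl
  have hcont : Continuous F := by
    refine continuous_of_tsupport fun z hz => ?_
    have hz1 : 0 < z.1 := hf.2.2 (hcl hz).1
    have hz2 : 0 < z.2 := hf.2.2 (hcl hz).2
    have hfc : Continuous f := hf.1.continuous
    have hadd : ContinuousAt (fun w : ℝ × ℝ => h (w.1 + w.2)) z :=
      ContinuousAt.comp (f := fun w : ℝ × ℝ => w.1 + w.2) (g := h)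
        (hh.continuousAt (Ioi_mem_nhds (add_pos hz1 hz2))) (by fun_prop)
    exact (hadd.mul (by fun_prop)).mul
      (Complex.continuous_conj.comp (hfc.comp continuous_fst)).continuousAt
  rw [quadrantVolume, Measure.prod_restrict]
  exact (hcont.integrable_of_hasCompactSupport hcomp).integrableOn

lemma IsTestFun.hankelQF_eq {h : ℝ → ℂ} (hh : ContinuousOn h (Set.Ioi 0)) {f : ℝ → ℂ}
    (hf : IsTestFun f) :
    hankelQF h f =
      ∫ z, h (z.1 + z.2) * f z.2 * (starRingEnd ℂ) (f z.1) ∂quadrantVolume :=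
  (integral_prod _ (hf.integrable_hankel hh)).symm

lemma continuousOn_rpow_mul_exp (α k : ℝ) :
    ContinuousOn (fun t : ℝ => ((t ^ k * Real.exp (-α * t) : ℝ) : ℂ)) (Set.Ioi 0) := by
  refine Complex.continuous_ofReal.comp_continuousOn (ContinuousOn.mul ?_ (by fun_prop))
  exact fun t ht => (Real.continuousAt_rpow_const t k (Or.inl (ne_of_gt ht))).continuousWithinAt

/-- A rank-one kernel gives a nonnegative integral. -/
lemma integral_exp_rank_one_nonneg (c : ℝ) (f : ℝ → ℂ) :
    0 ≤ ∫ z, (Real.exp (-c * (z.1 + z.2)) : ℂ) * f z.2 * (starRingEnd ℂ) (f z.1)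
      ∂quadrantVolume := by
  have : ∀ z : ℝ × ℝ, (Real.exp (-c * (z.1 + z.2)) : ℂ) * f z.2 * (starRingEnd ℂ) (f z.1) =
      (starRingEnd ℂ) ((Real.exp (-c * z.1) : ℂ) * f z.1) *
        ((Real.exp (-c * z.2) : ℂ) * f z.2) := by
    intro z
    rw [mul_add, Real.exp_add, map_mul, Complex.conj_ofReal]
    push_cast
    ring
  simp_rw [this]
  rw [integral_prod_mul (fun t => (starRingEnd ℂ) ((Real.exp (-c * t) : ℂ) * f t))
    (fun t => (Real.exp (-c * t) : ℂ) * f t), integral_conj, mul_comm, Complex.mul_conj]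
  exact Complex.zero_le_real.2 (Complex.normSq_nonneg _)

lemma hankelQF_nonneg_of_neg {α k : ℝ} (hα : 0 < α) (hk : k < 0) {f : ℝ → ℂ}
    (hf : IsTestFun f) :
    0 ≤ hankelQF (fun t : ℝ => ((t ^ k * Real.exp (-α * t) : ℝ) : ℂ)) f := by
  set μ : Measure ℝ := volume.restrict (Set.Ioi (0:ℝ)) with hμ
  set G : ℝ × ℝ → ℝ → ℂ := fun z x =>
    ((x ^ (-k - 1) * Real.exp (-((z.1 + z.2) * x)) : ℝ) : ℂ) *
      ((Real.exp (-α * (z.1 + z.2)) : ℂ) * f z.2 * (starRingEnd ℂ) (f z.1)) with hG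
  obtain ⟨δ, hδ, hδf⟩ := hf.exists_pos_le
  have hfc : Continuous f := hf.1.continuous
  have hint : Integrable (Function.uncurry G) (quadrantVolume.prod μ) := by
    have hfi : Integrable (fun t => ‖f t‖) μ := hf.integrable.norm.integrableOn
    have hxi : Integrable (fun x : ℝ => x ^ (-k - 1) * Real.exp (-(2 * δ * x))) μ :=
      .of_integral_ne_zero (by
        rw [Real.integral_rpow_mul_exp_neg_mul_Ioi (neg_pos.2 hk) (by positivity)]
        have := Real.Gamma_pos_of_pos (neg_pos.2 hk)
        positivity)
    refine ((hfi.mul_prod hfi).mul_prod hxi).mono' ?_ ?_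
    · refine Measurable.aestronglyMeasurable ?_
      have : Measurable f := hfc.measurable
      have hconj : Measurable (starRingEnd ℂ) := Complex.continuous_conj.measurable
      simp only [hG, Function.uncurry_def]
      refine Measurable.mul (by fun_prop) (Measurable.mul (by fun_prop) ?_)
      exact hconj.comp (by fun_prop)
    · rw [hμ, Measure.prod_restrict, Measure.prod_restrict]
      refine ae_restrict_of_forall_mem
        ((measurableSet_Ioi.prod measurableSet_Ioi).prod measurableSet_Ioi) ?_
      rintro ⟨⟨t, s⟩, x⟩ ⟨⟨ht, hs⟩, hx⟩
      simp only [Set.mem_Ioi] at ht hs hx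
      simp only [hG, Function.uncurry_apply_pair, norm_mul, Complex.norm_real, RCLike.norm_conj,
        Real.norm_eq_abs, Real.abs_exp, abs_of_pos (Real.rpow_pos_of_pos hx _)]
      by_cases hft : f t = 0
      · simp [hft]
      by_cases hfs : f s = 0
      · simp [hfs]
      have h1 : Real.exp (-((t + s) * x)) ≤ Real.exp (-(2 * δ * x)) := by
        have := hδf t hft
        have := hδf s hfs
        gcongr
        linarith
      have h2 : Real.exp (-α * (t + s)) ≤ 1 := by
        rw [Real.exp_le_one_iff]
        nlinarith
      calc _ ≤ x ^ (-k - 1) * Real.exp (-(2 * δ * x)) * (1 * ‖f s‖ * ‖f t‖) := by gcongr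
        _ = _ := by ring
  have hΓ : 0 < Real.Gamma (-k) := Real.Gamma_pos_of_pos (neg_pos.2 hk)
  have hinner : ∀ᵐ z ∂quadrantVolume, ∫ x, G z x ∂μ = (Real.Gamma (-k) : ℂ) *
      (((((z.1 + z.2) ^ k * Real.exp (-α * (z.1 + z.2)) : ℝ) : ℂ)) * f z.2 *
        (starRingEnd ℂ) (f z.1)) := by
    filter_upwards [ae_quadrantVolume_pos] with z hz
    have hz' : 0 < z.1 + z.2 := add_pos hz.1 hz.2
    simp only [hG]
    rw [integral_mul_const, integral_complex_ofReal, hμ,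
      Real.integral_rpow_mul_exp_neg_mul_Ioi (neg_pos.2 hk) hz', one_div,
      Real.inv_rpow hz'.le, Real.rpow_neg hz'.le, inv_inv]
    push_cast
    ring
  have hkey : (Real.Gamma (-k) : ℂ) *
      hankelQF (fun t : ℝ => ((t ^ k * Real.exp (-α * t) : ℝ) : ℂ)) f =
        ∫ x, ∫ z, G z x ∂quadrantVolume ∂μ := by
    rw [hf.hankelQF_eq (continuousOn_rpow_mul_exp α k), ← integral_const_mul,
      ← integral_congr_ae hinner, integral_integral_swap hint]
  have hnonneg : 0 ≤ ∫ x, ∫ z, G z x ∂quadrantVolume ∂μ := by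
    refine integral_nonneg_of_ae ?_
    filter_upwards [ae_restrict_mem measurableSet_Ioi] with x hx
    have : ∀ z, G z x = ((x ^ (-k - 1) : ℝ) : ℂ) *
        ((Real.exp (-(x + α) * (z.1 + z.2)) : ℂ) * f z.2 * (starRingEnd ℂ) (f z.1)) := by
      intro z
      rw [show -(x + α) * (z.1 + z.2) = -((z.1 + z.2) * x) + -α * (z.1 + z.2) by ring,
        Real.exp_add]
      simp only [hG]
      push_cast
      ring
    simp_rw [this]
    rw [integral_const_mul]
    exact mul_nonneg (Complex.zero_le_real.2 (Real.rpow_nonneg (le_of_lt hx) _))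
      (integral_exp_rank_one_nonneg _ f)
  rw [← inv_mul_cancel_left₀ (Complex.ofReal_ne_zero.2 hΓ.ne') (hankelQF _ f), hkey,
    ← Complex.ofReal_inv]
  exact mul_nonneg (Complex.zero_le_real.2 (inv_nonneg.2 hΓ.le)) hnonneg

lemma hankelQF_exp_nonneg (α : ℝ) {f : ℝ → ℂ} (hf : IsTestFun f) :
    0 ≤ hankelQF (fun t : ℝ => ((t ^ (0:ℝ) * Real.exp (-α * t) : ℝ) : ℂ)) f := by
  rw [hf.hankelQF_eq (continuousOn_rpow_mul_exp α 0)]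
  simpa only [Real.rpow_zero, one_mul] using integral_exp_rank_one_nonneg α f

/-- After absorbing the exponential, the form of a real test function `e^{αt} g(t)` is the real
integral of `(t+s)^k g(s) g(t)`. -/
lemma hankelQF_exp_mul (α k : ℝ) {g : ℝ → ℝ}
    (hg : IsTestFun fun t => ((Real.exp (α * t) * g t : ℝ) : ℂ)) :
    Integrable (fun z : ℝ × ℝ => (z.1 + z.2) ^ k * (g z.1 * g z.2)) quadrantVolume ∧
    hankelQF (fun t : ℝ => ((t ^ k * Real.exp (-α * t) : ℝ) : ℂ))
      (fun t => ((Real.exp (α * t) * g t : ℝ) : ℂ)) =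
      ((∫ z, (z.1 + z.2) ^ k * (g z.1 * g z.2) ∂quadrantVolume : ℝ) : ℂ) := by
  have hcongr : ∀ z : ℝ × ℝ,
      (((z.1 + z.2) ^ k * Real.exp (-α * (z.1 + z.2)) : ℝ) : ℂ) *
        ((Real.exp (α * z.2) * g z.2 : ℝ) : ℂ) *
        (starRingEnd ℂ) ((Real.exp (α * z.1) * g z.1 : ℝ) : ℂ) =
      (((z.1 + z.2) ^ k * (g z.1 * g z.2) : ℝ) : ℂ) := by
    intro z
    rw [Complex.conj_ofReal, ← Complex.ofReal_mul, ← Complex.ofReal_mul, Complex.ofReal_inj]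
    have h1 : Real.exp (-α * (z.1 + z.2)) * (Real.exp (α * z.2) * Real.exp (α * z.1)) = 1 := by
      rw [← Real.exp_add, ← Real.exp_add, Real.exp_eq_one_iff]
      ring
    linear_combination ((z.1 + z.2) ^ k * (g z.1 * g z.2)) * h1
  have hint := hg.integrable_hankel (continuousOn_rpow_mul_exp α k)
  rw [hg.hankelQF_eq (continuousOn_rpow_mul_exp α k)]
  simp_rw [hcongr] at hint ⊢
  exact ⟨by simpa using hint.re, integral_ofReal⟩

/-- A normalized bump of radius one around `c`. -/
def unitBump (c : ℝ) : ℝ → ℝ :=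
  (⟨1 / 2, 1, by norm_num, by norm_num⟩ : ContDiffBump c).normed volume

lemma unitBump_nonneg (c t : ℝ) : 0 ≤ unitBump c t := ContDiffBump.nonneg_normed _ _

lemma mem_Ioo_of_unitBump_ne_zero {c t : ℝ} (h : unitBump c t ≠ 0) :
    t ∈ Set.Ioo (c - 1) (c + 1) := by
  have : t ∈ Function.support (unitBump c) := h
  rw [unitBump, ContDiffBump.support_normed_eq, Real.ball_eq_Ioo] at this
  exact this

lemma contDiff_unitBump (c : ℝ) : ContDiff ℝ (⊤ : ℕ∞) (unitBump c) :=
  ContDiffBump.contDiff_normed _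

lemma tsupport_unitBump (c : ℝ) : tsupport (unitBump c) = Set.Icc (c - 1) (c + 1) := by
  rw [unitBump, ContDiffBump.tsupport_normed_eq, Real.closedBall_eq_Icc]

lemma integrable_unitBump (c : ℝ) : Integrable (unitBump c) (volume.restrict (Set.Ioi 0)) :=
  (ContDiffBump.integrable_normed _).integrableOn

lemma integral_unitBump {c : ℝ} (hc : 1 ≤ c) : ∫ t in Set.Ioi 0, unitBump c t = 1 := by
  rw [setIntegral_eq_integral_of_forall_compl_eq_zero]
  · exact ContDiffBump.integral_normed _
  · intro t ht
    by_contra h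
    exact ht (Set.mem_Ioi.2 (by linarith [(mem_Ioo_of_unitBump_ne_zero h).1]))

lemma integrable_unitBump_prod (c d : ℝ) :
    Integrable (fun z : ℝ × ℝ => unitBump c z.1 * unitBump d z.2) quadrantVolume :=
  (integrable_unitBump c).mul_prod (integrable_unitBump d)

lemma integral_unitBump_prod {c d : ℝ} (hc : 1 ≤ c) (hd : 1 ≤ d) :
    ∫ z, unitBump c z.1 * unitBump d z.2 ∂quadrantVolume = 1 := by
  rw [integral_prod_mul, integral_unitBump hc, integral_unitBump hd, one_mul]

lemma isTestFun_exp_mul_unitBump (α x y : ℝ) {c d : ℝ} (hc : 1 < c) (hd : 1 < d) :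
    IsTestFun fun t =>
      ((Real.exp (α * t) * (x * unitBump c t - y * unitBump d t) : ℝ) : ℂ) := by
  have hsub : tsupport (fun t =>
      ((Real.exp (α * t) * (x * unitBump c t - y * unitBump d t) : ℝ) : ℂ)) ⊆
      Set.Icc (c - 1) (c + 1) ∪ Set.Icc (d - 1) (d + 1) := by
    refine closure_minimal (fun t ht => ?_) (isClosed_Icc.union isClosed_Icc)
    by_contra h
    rw [Set.mem_union, not_or, ← tsupport_unitBump, ← tsupport_unitBump] at h
    exact ht (by simp [image_eq_zero_of_notMem_tsupport h.1,
      image_eq_zero_of_notMem_tsupport h.2])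
  refine ⟨?_, IsCompact.of_isClosed_subset (isCompact_Icc.union isCompact_Icc)
    (isClosed_tsupport _) hsub, hsub.trans ?_⟩
  · refine Complex.ofRealCLM.contDiff.comp (ContDiff.mul (by fun_prop) ?_)
    exact (contDiff_const.mul (contDiff_unitBump c)).sub
      (contDiff_const.mul (contDiff_unitBump d))
  · rintro t (ht | ht)
    · exact Set.mem_Ioi.2 (by linarith [ht.1])
    · exact Set.mem_Ioi.2 (by linarith [ht.1])

lemma rpow_mul_unitBump_le {k : ℝ} (hk : 0 ≤ k) {c d s t : ℝ} (ht : 0 < t) (hs : 0 < s) :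
    (t + s) ^ k * (unitBump c t * unitBump d s) ≤
      (c + d + 2) ^ k * (unitBump c t * unitBump d s) := by
  by_cases h : unitBump c t * unitBump d s = 0
  · simp [h]
  have h1 := (mem_Ioo_of_unitBump_ne_zero (left_ne_zero_of_mul h)).2
  have h2 := (mem_Ioo_of_unitBump_ne_zero (right_ne_zero_of_mul h)).2
  exact mul_le_mul_of_nonneg_right (Real.rpow_le_rpow (by linarith) (by linarith) hk)
    (mul_nonneg (unitBump_nonneg _ _) (unitBump_nonneg _ _))

lemma le_rpow_mul_unitBump {k : ℝ} (hk : 0 ≤ k) {c d s t : ℝ} (hcd : 2 ≤ c + d) :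
    (c + d - 2) ^ k * (unitBump c t * unitBump d s) ≤
      (t + s) ^ k * (unitBump c t * unitBump d s) := by
  by_cases h : unitBump c t * unitBump d s = 0
  · simp [h]
  have h1 := (mem_Ioo_of_unitBump_ne_zero (left_ne_zero_of_mul h)).1
  have h2 := (mem_Ioo_of_unitBump_ne_zero (right_ne_zero_of_mul h)).1
  exact mul_le_mul_of_nonneg_right (Real.rpow_le_rpow (by linarith) (by linarith) hk)
    (mul_nonneg (unitBump_nonneg _ _) (unitBump_nonneg _ _))

lemma exists_hankelQF_pos (α : ℝ) {k : ℝ} (hk : 0 < k) :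
    ∃ f : ℝ → ℂ, IsTestFun f ∧
      0 < hankelQF (fun t : ℝ => ((t ^ k * Real.exp (-α * t) : ℝ) : ℂ)) f := by
  have htest := isTestFun_exp_mul_unitBump α 1 0 (c := 2) (d := 2) (by norm_num) (by norm_num)
  obtain ⟨hint, hQ⟩ := hankelQF_exp_mul α k htest
  refine ⟨_, htest, ?_⟩
  rw [hQ, Complex.zero_lt_real]
  calc (0:ℝ) < (2 + 2 - 2) ^ k * 1 := by
        rw [mul_one]
        exact Real.rpow_pos_of_pos (by norm_num) k
    _ = ∫ z, (2 + 2 - 2) ^ k * (unitBump 2 z.1 * unitBump 2 z.2) ∂quadrantVolume := by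
        rw [integral_const_mul, integral_unitBump_prod (by norm_num) (by norm_num)]
    _ ≤ _ := by
        refine integral_mono ((integrable_unitBump_prod 2 2).const_mul _) hint fun z => ?_
        simpa using le_rpow_mul_unitBump hk.le (c := 2) (d := 2) (s := z.2) (t := z.1)
          (by norm_num)

/-- Two bumps around `2` and `20`, weighted so that the cross term dominates: this works because
`6 * 42 < 20 ^ 2`. -/
lemma exists_hankelQF_neg (α : ℝ) {k : ℝ} (hk : 0 < k) :
    ∃ f : ℝ → ℂ, IsTestFun f ∧
      hankelQF (fun t : ℝ => ((t ^ k * Real.exp (-α * t) : ℝ) : ℂ)) f < 0 := by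
  set x : ℝ := 42 ^ (k / 2) with hx
  set y : ℝ := 6 ^ (k / 2) with hy
  have hx0 : 0 < x := Real.rpow_pos_of_pos (by norm_num) _
  have hy0 : 0 < y := Real.rpow_pos_of_pos (by norm_num) _
  have hx2 : (42:ℝ) ^ k = x * x := by rw [hx, ← Real.rpow_add (by norm_num), add_halves]
  have hy2 : (6:ℝ) ^ k = y * y := by rw [hy, ← Real.rpow_add (by norm_num), add_halves]
  have hxy : x * y < 20 ^ k := by
    have h20 : (20:ℝ) ^ k = 400 ^ (k / 2) := by
      rw [show (400:ℝ) = 20 * 20 by norm_num, Real.mul_rpow (by norm_num) (by norm_num),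
        ← Real.rpow_add (by norm_num), add_halves]
    rw [hx, hy, ← Real.mul_rpow (by norm_num) (by norm_num), h20]
    exact Real.rpow_lt_rpow (by norm_num) (by norm_num) (by positivity)
  have htest := isTestFun_exp_mul_unitBump α x y (c := 2) (d := 20) (by norm_num) (by norm_num)
  obtain ⟨hint, hQ⟩ := hankelQF_exp_mul α k htest
  refine ⟨_, htest, ?_⟩
  rw [hQ, ← Complex.ofReal_zero, Complex.real_lt_real]
  have i11 := (integrable_unitBump_prod 2 2).const_mul (x ^ 2 * 6 ^ k)
  have i12 := (integrable_unitBump_prod 2 20).const_mul (x * y * 20 ^ k)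
  have i21 := (integrable_unitBump_prod 20 2).const_mul (x * y * 20 ^ k)
  have i22 := (integrable_unitBump_prod 20 20).const_mul (y ^ 2 * 42 ^ k)
  calc _ ≤ ∫ z, (x ^ 2 * 6 ^ k * (unitBump 2 z.1 * unitBump 2 z.2)
          - x * y * 20 ^ k * (unitBump 2 z.1 * unitBump 20 z.2)
          - x * y * 20 ^ k * (unitBump 20 z.1 * unitBump 2 z.2)
          + y ^ 2 * 42 ^ k * (unitBump 20 z.1 * unitBump 20 z.2)) ∂quadrantVolume := by
        refine integral_mono_ae hint (((i11.sub i12).sub i21).add i22) ?_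
        filter_upwards [ae_quadrantVolume_pos] with z hz
        have b11 := rpow_mul_unitBump_le hk.le (c := 2) (d := 2) hz.1 hz.2
        have b22 := rpow_mul_unitBump_le hk.le (c := 20) (d := 20) hz.1 hz.2
        have b12 := le_rpow_mul_unitBump hk.le (c := 2) (d := 20) (s := z.2) (t := z.1)
          (by norm_num)
        have b21 := le_rpow_mul_unitBump hk.le (c := 20) (d := 2) (s := z.2) (t := z.1)
          (by norm_num)
        norm_num only at b11 b22 b12 b21
        have c11 := mul_le_mul_of_nonneg_left b11 (sq_nonneg x)
        have c22 := mul_le_mul_of_nonneg_left b22 (sq_nonneg y)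
        have c12 := mul_le_mul_of_nonneg_left b12 (mul_pos hx0 hy0).le
        have c21 := mul_le_mul_of_nonneg_left b21 (mul_pos hx0 hy0).le
        linear_combination c11 + c22 + c12 + c21
    _ = x ^ 2 * 6 ^ k - x * y * 20 ^ k - x * y * 20 ^ k + y ^ 2 * 42 ^ k := by
        rw [integral_add (f := fun z => _ - _ - _) ((i11.sub i12).sub i21) i22,
          integral_sub (f := fun z => _ - _) (i11.sub i12) i21, integral_sub i11 i12]
        simp only [integral_const_mul]
        rw [integral_unitBump_prod (by norm_num) (by norm_num),
          integral_unitBump_prod (by norm_num) (by norm_num),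
          integral_unitBump_prod (by norm_num) (by norm_num),
          integral_unitBump_prod (by norm_num) (by norm_num)]
        ring
    _ = 2 * (x * y) * (x * y - 20 ^ k) := by rw [hx2, hy2]; ring
    _ < 0 := mul_neg_of_pos_of_neg (by positivity) (by linarith)

/-- The Hankel form with kernel `h(t) = t^k e^{-αt}` (`α > 0`, `k ≥ -1`) is positive
iff `k ≤ 0`; for `k > 0` it is not sign-definite. -/
theorem hankel_power_exp_kernel (α k : ℝ) (hα : 0 < α) (hk : -1 ≤ k) :
    ((k ≤ 0) → ∀ f : ℝ → ℂ, IsTestFun f →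
      0 ≤ hankelQF (fun t : ℝ => ((t ^ k * Real.exp (-α * t) : ℝ) : ℂ)) f)
    ∧ ((0 < k) →
      (∃ fp : ℝ → ℂ, IsTestFun fp ∧
        0 < hankelQF (fun t : ℝ => ((t ^ k * Real.exp (-α * t) : ℝ) : ℂ)) fp) ∧
      (∃ fm : ℝ → ℂ, IsTestFun fm ∧
        hankelQF (fun t : ℝ => ((t ^ k * Real.exp (-α * t) : ℝ) : ℂ)) fm < 0)) := by
  refine ⟨fun hk0 f hf => ?_, fun hk0 => ⟨exists_hankelQF_pos α hk0, exists_hankelQF_neg α hk0⟩⟩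
  rcases hk0.lt_or_eq with h | rfl
  · exact hankelQF_nonneg_of_neg hα h hf
  · exact hankelQF_exp_nonneg α hf
end
end

section
/- Let α₁, …, α_M be pairwise distinct complex numbers with Re α_m > 0 and P₁, …, P_M nonzero polynomials with complex coefficients such that v(t) = Σ_{m=1}^M P_m(t) e^{-α_m t} is real-valued for t > 0 (so the Hankel operator with kernel v has finite rank). Set h(t) = t^{-1} + v(t), the kernel of the Carleman operator perturbed by v. Then N₋(Q_h) = N₋(Q_v). In particular, Q_h[f] ≥ 0 for all f ∈ C_c^∞((0,∞)) if and only if Q_v[f] ≥ 0 for all f ∈ C_c^∞((0,∞)). -/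
open MeasureTheory
open scoped ComplexOrder

noncomputable section

/-- A finite-rank (real) kernel `v(t) = Σ_m P_m(t) e^{-α_m t}`. -/
def finiteRankKernel (M : ℕ) (α : ℕ → ℂ) (P : ℕ → Polynomial ℂ) : ℝ → ℂ :=
  fun t : ℝ => ∑ m ∈ Finset.range M, (P m).eval (t : ℂ) * Complex.exp (-(α m) * t)

open scoped ContDiff ComplexConjugate

local notation "μ₊" => Measure.restrict (volume : Measure ℝ) (Set.Ioi (0 : ℝ))

/-! ### Perturbing negative subspaces along the kernel of a Hermitian form -/

/-- If vectors can be corrected by elements of the kernel of a Hermitian form `B` so that their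
image under `q` becomes arbitrarily small, then a `B`-negative finite-dimensional family can be
corrected to be negative for `‖q ·‖² + B`. -/
theorem exists_linearMap_norm_sq_add_re_neg {V H : Type*} [AddCommGroup V] [Module ℂ V]
    [SeminormedAddCommGroup H] [NormedSpace ℂ H] (B : V →ₗ[ℂ] V →ₗ⋆[ℂ] ℂ)
    (hB : ∀ f g, B f g = conj (B g f)) (q : V →ₗ[ℂ] H)
    (happrox : ∀ f, ∀ ε > 0, ∃ u ∈ LinearMap.ker B, ‖q (f - u)‖ < ε)
    {n : ℕ} (S : (Fin n → ℂ) →ₗ[ℂ] V) (hS : ∀ c ≠ 0, (B (S c) (S c)).re < 0) :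
    ∃ S' : (Fin n → ℂ) →ₗ[ℂ] V, ∀ c ≠ 0, ‖q (S' c)‖ ^ 2 + (B (S' c) (S' c)).re < 0 := by
  have hsum : ∀ c : Fin n → ℂ, S c = ∑ i, c i • S (Pi.single i 1) := fun c => by
    conv_lhs => rw [pi_eq_sum_univ' c]
    simp
  have hcont : Continuous fun c : Fin n → ℂ => -(B (S c) (S c)).re := by
    have : ∀ c : Fin n → ℂ, B (S c) (S c) =
        ∑ i, c i * ∑ j, conj (c j) * B (S (Pi.single i 1)) (S (Pi.single j 1)) := by
      intro c
      rw [hsum c]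
      simp only [map_sum, LinearMap.sum_apply, map_smul, LinearMap.smul_apply,
        LinearMap.map_smulₛₗ, smul_eq_mul, Finset.mul_sum]
      rw [Finset.sum_comm]
      exact Finset.sum_congr rfl fun i _ => Finset.sum_congr rfl fun j _ => by ring
    simp only [this]
    fun_prop
  obtain ⟨δ, hδ, hδS⟩ := (isCompact_sphere (0 : Fin n → ℂ) 1).exists_forall_le'
    (a := 0) hcont.continuousOn (fun c hc => by
      have : c ≠ 0 := by rintro rfl; simp at hc
      linarith [hS c this])
  set ε : ℝ := √δ / (n + 1) with hε
  have hεpos : 0 < ε := by positivity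
  choose u hu hqu using fun i => happrox (S (Pi.single i 1)) ε hεpos
  set U : (Fin n → ℂ) →ₗ[ℂ] V := Fintype.linearCombination ℂ u with hU
  have hUker : ∀ c, B (U c) = 0 := by
    intro c
    simp only [hU, Fintype.linearCombination_apply, map_sum, map_smul]
    exact Finset.sum_eq_zero fun i _ => by rw [LinearMap.mem_ker.1 (hu i), smul_zero]
  have hBS : ∀ c, B ((S - U) c) ((S - U) c) = B (S c) (S c) := by
    intro c
    have h : B (S c) (U c) = 0 := by rw [hB, hUker]; simp
    simp [hUker, h]
  have hsphere : ∀ c : Fin n → ℂ, ‖c‖ = 1 →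
      ‖q ((S - U) c)‖ ^ 2 + (B ((S - U) c) ((S - U) c)).re < 0 := by
    intro c hc
    have hq : ‖q ((S - U) c)‖ ≤ n * ε := by
      have : (S - U) c = ∑ i, c i • (S (Pi.single i 1) - u i) := by
        rw [LinearMap.sub_apply, hsum c, hU, Fintype.linearCombination_apply,
          ← Finset.sum_sub_distrib]
        simp [smul_sub]
      rw [this, map_sum]
      refine (norm_sum_le _ _).trans ?_
      calc ∑ i, ‖q (c i • (S (Pi.single i 1) - u i))‖ ≤ ∑ _i : Fin n, ε := by
            refine Finset.sum_le_sum fun i _ => ?_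
            rw [map_smul, norm_smul]
            have h1 : ‖c i‖ ≤ 1 := hc ▸ norm_le_pi_norm c i
            nlinarith [norm_nonneg (q (S (Pi.single i 1) - u i)), hqu i, norm_nonneg (c i)]
        _ = n * ε := by simp
    have hlt : n * ε < √δ := by
      rw [hε, mul_div_assoc', div_lt_iff₀ (by positivity)]
      nlinarith [Real.sqrt_pos.2 hδ]
    have h2 : ‖q ((S - U) c)‖ ^ 2 < δ := by
      rw [← Real.sq_sqrt hδ.le]
      exact pow_lt_pow_left₀ (hq.trans_lt hlt) (norm_nonneg _) two_ne_zero
    have h3 := hδS c (by simpa using hc)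
    rw [hBS]
    linarith
  refine ⟨S - U, fun c hc => ?_⟩
  have hc' : 0 < ‖c‖ := norm_pos_iff.2 hc
  have h := hsphere (((‖c‖⁻¹ : ℝ) : ℂ) • c) (by
    rw [norm_smul, Complex.norm_real, norm_inv, norm_norm, inv_mul_cancel₀ hc'.ne'])
  rw [map_smul, map_smul, norm_smul, LinearMap.map_smulₛₗ, map_smul, LinearMap.smul_apply,
    Complex.conj_ofReal, smul_eq_mul, smul_eq_mul, Complex.re_ofReal_mul, Complex.re_ofReal_mul,
    Complex.norm_real, norm_inv, norm_norm] at h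
  have h4 : ‖c‖⁻¹ ^ 2 * (‖q ((S - U) c)‖ ^ 2 + (B ((S - U) c) ((S - U) c)).re) < 0 := by
    nlinarith [h]
  exact (pos_iff_neg_of_mul_neg h4).1 (by positivity)

/-! ### Injectivity of the Laplace transform -/

theorem integrable_bounded_comp_smul {w : ℝ → ℂ} (hw : Integrable w μ₊) {f : ℝ → ℝ}
    (hf : ContinuousOn f (Set.Icc 0 1)) :
    Integrable (fun l => f (Real.exp (-l)) • w l) μ₊ := by
  obtain ⟨C, hC⟩ := isCompact_Icc.exists_bound_of_continuousOn hf
  have hmem : ∀ l ∈ Set.Ioi (0 : ℝ), Real.exp (-l) ∈ Set.Icc (0 : ℝ) 1 := fun l hl =>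
    ⟨(Real.exp_pos _).le, by simpa using (Set.mem_Ioi.1 hl).le⟩
  refine hw.bdd_smul (φ := fun l => f (Real.exp (-l))) C ?_ ?_
  · exact (hf.comp (by fun_prop) hmem).aestronglyMeasurable measurableSet_Ioi
  · exact (ae_restrict_mem measurableSet_Ioi).mono fun l hl => hC _ (hmem l hl)

theorem integral_comp_exp_smul_eq_zero {w : ℝ → ℂ} (hw : Integrable w μ₊)
    (h : ∀ n : ℕ, ∫ l in Set.Ioi (0 : ℝ), Real.exp (-l) ^ n • w l = 0) {f : ℝ → ℝ}
    (hf : ContinuousOn f (Set.Icc 0 1)) :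
    ∫ l in Set.Ioi (0 : ℝ), f (Real.exp (-l)) • w l = 0 := by
  have hpoly : ∀ p : Polynomial ℝ,
      ∫ l in Set.Ioi (0 : ℝ), p.eval (Real.exp (-l)) • w l = 0 := by
    intro p
    simp only [Polynomial.eval_eq_sum_range, Finset.sum_smul, mul_smul]
    rw [integral_finsetSum]
    · exact Finset.sum_eq_zero fun i _ => by rw [integral_smul, h, smul_zero]
    · intro i _
      exact (integrable_bounded_comp_smul hw (f := fun x => x ^ i) (by fun_prop)).smul _
  rw [← norm_le_zero_iff]
  refine le_of_forall_pos_le_add fun ε hε => ?_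
  set A := ∫ l in Set.Ioi (0 : ℝ), ‖w l‖ with hA
  have hA0 : 0 ≤ A := integral_nonneg fun _ => norm_nonneg _
  obtain ⟨p, hp⟩ := exists_polynomial_near_of_continuousOn 0 1 f hf (ε / (A + 1)) (by positivity)
  have hpc : ContinuousOn (fun x => p.eval x) (Set.Icc 0 1) := p.continuous.continuousOn
  rw [← sub_zero (∫ l in Set.Ioi (0 : ℝ), f (Real.exp (-l)) • w l), ← hpoly p,
    ← integral_sub (integrable_bounded_comp_smul hw hf) (integrable_bounded_comp_smul hw hpc)]
  calc ‖∫ l in Set.Ioi (0 : ℝ), (f (Real.exp (-l)) • w l - p.eval (Real.exp (-l)) • w l)‖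
      ≤ ∫ l in Set.Ioi (0 : ℝ), ε / (A + 1) * ‖w l‖ := by
        refine norm_integral_le_of_norm_le (hw.norm.const_mul _) ?_
        refine (ae_restrict_mem measurableSet_Ioi).mono fun l hl => ?_
        rw [← sub_smul, norm_smul, Real.norm_eq_abs, abs_sub_comm]
        gcongr
        exact (hp _ ⟨(Real.exp_pos _).le, by simpa using (Set.mem_Ioi.1 hl).le⟩).le
    _ = ε / (A + 1) * A := by rw [integral_const_mul]
    _ ≤ 0 + ε := by
        rw [zero_add, div_mul_eq_mul_div, div_le_iff₀ (by positivity)]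
        nlinarith

/-- An integrable function on the half-line whose Laplace transform vanishes at all natural
numbers is zero almost everywhere. -/
theorem ae_eq_zero_of_integral_exp_pow_smul_eq_zero {w : ℝ → ℂ} (hw : Integrable w μ₊)
    (h : ∀ n : ℕ, ∫ l in Set.Ioi (0 : ℝ), Real.exp (-l) ^ n • w l = 0) :
    ∀ᵐ l ∂μ₊, w l = 0 := by
  rw [ae_restrict_iff' measurableSet_Ioi]
  refine isOpen_Ioi.ae_eq_zero_of_integral_contDiff_smul_eq_zero
    (IntegrableOn.locallyIntegrableOn hw) fun g hg hgc hgs => ?_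
  have hg0 : ∀ x ∉ Set.Ioi (0 : ℝ), g x = 0 := fun x hx =>
    image_eq_zero_of_notMem_tsupport fun hx' => hx (hgs hx')
  rw [← setIntegral_eq_integral_of_forall_compl_eq_zero (s := Set.Ioi (0 : ℝ))
    (fun x hx => by rw [hg0 x hx, zero_smul])]
  have hf : ContinuousOn (fun x => g (-Real.log x)) (Set.Icc 0 1) := by
    intro x hx
    apply ContinuousAt.continuousWithinAt
    rcases hx.1.eq_or_lt with rfl | hpos
    · have hev : ∀ᶠ y in nhds (0 : ℝ), g (-Real.log y) = 0 := by
        have h1 : ∀ᶠ z in Filter.atTop, g z = 0 := by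
          have := hasCompactSupport_iff_eventuallyEq.1 hgc
          rw [Filter.coclosedCompact_eq_cocompact] at this
          exact atTop_le_cocompact this
        have h2 : ∀ᶠ y in nhdsWithin (0 : ℝ) {0}ᶜ, g (-Real.log y) = 0 :=
          (Filter.tendsto_neg_atBot_atTop.comp Real.tendsto_log_nhdsNE_zero).eventually h1
        rw [eventually_nhdsWithin_iff] at h2
        filter_upwards [h2] with y hy
        by_cases hy0 : y = 0
        · rw [hy0, Real.log_zero, neg_zero]
          exact hg0 0 (by simp)
        · exact hy hy0
      exact (continuousAt_const (y := (0 : ℝ))).congr (hev.mono fun y hy => hy.symm)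
    · exact hg.continuous.continuousAt.comp (Real.continuousAt_log hpos.ne').neg
  simpa using integral_comp_exp_smul_eq_zero hw h hf

/-! ### Test functions -/

/-- The space of test functions on the open half-line. -/
def testFunSubmodule : Submodule ℂ (ℝ → ℂ) where
  carrier := {f | IsTestFun f}
  zero_mem' := ⟨contDiff_const, HasCompactSupport.zero, by simp⟩
  add_mem' := fun {f g} hf hg =>
    ⟨hf.1.add hg.1, hf.2.1.add hg.2.1, (tsupport_add f g).trans (Set.union_subset hf.2.2 hg.2.2)⟩
  smul_mem' := fun c f hf =>
    ⟨contDiff_const.smul hf.1, hf.2.1.smul_left (f := fun _ => c),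
      (tsupport_smul_subset_right (fun _ => c) f).trans hf.2.2⟩

namespace IsTestFun

variable {f : ℝ → ℂ}

theorem continuous (hf : IsTestFun f) : Continuous f := hf.1.continuous

theorem deriv (hf : IsTestFun f) : IsTestFun (deriv f) :=
  ⟨(contDiff_infty_iff_deriv.1 hf.1).2, hf.2.1.deriv, tsupport_deriv_subset.trans hf.2.2⟩

theorem eq_zero_of_notMem (hf : IsTestFun f) {t : ℝ} (ht : t ∉ Set.Ioi (0 : ℝ)) : f t = 0 :=
  image_eq_zero_of_notMem_tsupport fun h => ht (hf.2.2 h)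

theorem exists_pos_le_s5 (hf : IsTestFun f) : ∃ a > 0, ∀ t, f t ≠ 0 → a ≤ t := by
  rcases (tsupport f).eq_empty_or_nonempty with h | h
  · exact ⟨1, one_pos, fun t ht => by simpa [h] using subset_tsupport f ht⟩
  · obtain ⟨a, ha, hmin⟩ := IsCompact.exists_isLeast hf.2.1 h
    exact ⟨a, hf.2.2 ha, fun t ht => hmin (subset_tsupport f ht)⟩

theorem integrable_mul (hf : IsTestFun f) {g : ℝ → ℂ} (hg : Continuous g) (μ : Measure ℝ)
    [IsFiniteMeasureOnCompacts μ] : Integrable (fun t => g t * f t) μ :=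
  (hg.mul hf.continuous).integrable_of_hasCompactSupport hf.2.1.mul_left

theorem integrable_s5 (hf : IsTestFun f) (μ : Measure ℝ) [IsFiniteMeasureOnCompacts μ] :
    Integrable f μ :=
  hf.continuous.integrable_of_hasCompactSupport hf.2.1

theorem ofReal {φ : ℝ → ℝ} (hφ : ContDiff ℝ ∞ φ) (hφc : HasCompactSupport φ)
    (hφs : tsupport φ ⊆ Set.Ioi 0) : IsTestFun fun t => (φ t : ℂ) :=
  ⟨Complex.ofRealCLM.contDiff.comp hφ, hφc.comp_left Complex.ofReal_zero,
    (closure_mono fun t ht => by simpa using ht).trans hφs⟩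

end IsTestFun

/-- Differentiation as an endomorphism of the space of test functions. -/
def derivEnd : Module.End ℂ testFunSubmodule where
  toFun f := ⟨deriv f, f.2.deriv⟩
  map_add' f g := by
    ext t
    exact deriv_add (f.2.1.differentiable (by simp) t) (g.2.1.differentiable (by simp) t)
  map_smul' c f := by
    ext t
    exact deriv_const_smul c (f.2.1.differentiable (by simp) t)

/-! ### Pairings with exponential polynomials -/

/-- The functional `f ↦ ∫₀^∞ P(t) e^{-βt} f(t) dt`. -/
def expPolyPairing (β : ℂ) (P : Polynomial ℂ) : testFunSubmodule →ₗ[ℂ] ℂ where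
  toFun f := ∫ t in Set.Ioi (0 : ℝ), P.eval (t : ℂ) * Complex.exp (-β * t) * f.1 t
  map_add' f g := by
    have hc : Continuous fun t : ℝ => P.eval (t : ℂ) * Complex.exp (-β * t) := by fun_prop
    simp only [Submodule.coe_add, Pi.add_apply, mul_add]
    exact integral_add (f.2.integrable_mul hc _) (g.2.integrable_mul hc _)
  map_smul' c f := by
    simp only [Submodule.coe_smul, Pi.smul_apply, smul_eq_mul, RingHom.id_apply]
    rw [← integral_const_mul]
    congr 1 with t
    ring

theorem expPolyPairing_zero (β : ℂ) (f : testFunSubmodule) : expPolyPairing β 0 f = 0 := by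
  simp [expPolyPairing]

theorem expPolyPairing_derivEnd (β : ℂ) (P : Polynomial ℂ) (f : testFunSubmodule) :
    expPolyPairing β P (derivEnd f) =
      β * expPolyPairing β P f - expPolyPairing β (Polynomial.derivative P) f := by
  have hc : ∀ P : Polynomial ℂ,
      Continuous fun t : ℝ => P.eval (t : ℂ) * Complex.exp (-β * t) := fun P => by fun_prop
  have hu : ∀ t : ℝ, HasDerivAt (fun t : ℝ => P.eval (t : ℂ) * Complex.exp (-β * t))
      ((Polynomial.derivative P).eval (t : ℂ) * Complex.exp (-β * t) -
        β * (P.eval (t : ℂ) * Complex.exp (-β * t))) t := by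
    intro t
    have h1 := (P.hasDerivAt (t : ℂ)).comp_ofReal
    have h2 := (((hasDerivAt_id (t : ℂ)).const_mul (-β)).cexp).comp_ofReal
    refine (h1.mul h2).congr_deriv ?_
    simp only [id]
    ring
  have hv : ∀ t : ℝ, HasDerivAt f.1 (deriv f.1 t) t := fun t =>
    (f.2.1.differentiable (by simp) t).hasDerivAt
  have hzero : ∀ (g : ℝ → ℂ) (k : ℝ → ℂ), IsTestFun k →
      ∫ t in Set.Ioi (0 : ℝ), g t * k t = ∫ t, g t * k t := fun g k hk =>
    setIntegral_eq_integral_of_forall_compl_eq_zero fun t ht => by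
      rw [hk.eq_zero_of_notMem ht, mul_zero]
  have hibp := integral_mul_deriv_eq_deriv_mul_of_integrable (fun t _ => hu t) (fun t _ => hv t)
    (f.2.deriv.integrable_mul (hc P) volume)
    (f.2.integrable_mul ((hc _).sub (continuous_const.mul (hc P))) volume)
    (f.2.integrable_mul (hc P) volume)
  rw [← hzero _ _ f.2, ← hzero _ _ f.2.deriv] at hibp
  refine hibp.trans ?_
  simp only [expPolyPairing, LinearMap.coe_mk, AddHom.coe_mk]
  rw [← integral_const_mul, ← integral_neg, ← integral_sub]
  · congr 1 with t
    ring
  · exact (f.2.integrable_mul (hc P) _).const_mul β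
  · exact f.2.integrable_mul (hc _) _

theorem expPolyPairing_aeval_X_sub_C_pow (β : ℂ) (k : ℕ) (P : Polynomial ℂ)
    (hP : P.natDegree < k) (f : testFunSubmodule) :
    expPolyPairing β P
      (Polynomial.aeval derivEnd ((Polynomial.X - Polynomial.C β) ^ k) f) = 0 := by
  have key : ∀ (k : ℕ) (P : Polynomial ℂ), expPolyPairing β P
      (Polynomial.aeval derivEnd ((Polynomial.X - Polynomial.C β) ^ k) f) =
        (-1) ^ k * expPolyPairing β (Polynomial.derivative^[k] P) f := by
    intro k
    induction k with
    | zero => simp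
    | succ k ih =>
      intro P
      rw [pow_succ', map_mul, Module.End.mul_apply, Function.iterate_succ_apply, pow_succ,
        mul_assoc, neg_one_mul, mul_neg, ← ih]
      simp only [map_sub, Polynomial.aeval_X, Polynomial.aeval_C, LinearMap.sub_apply,
        Module.algebraMap_end_apply, map_smul, expPolyPairing_derivEnd, smul_eq_mul]
      ring
  rw [key, Polynomial.iterate_derivative_eq_zero hP, expPolyPairing_zero, mul_zero]

/-- The Laplace transform of a test function. -/
def laplace (f : testFunSubmodule) (l : ℝ) : ℂ := expPolyPairing l 1 f

theorem laplace_apply (f : testFunSubmodule) (l : ℝ) :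
    laplace f l = ∫ t in Set.Ioi (0 : ℝ), Complex.exp (-l * t) * f.1 t := by
  simp [laplace, expPolyPairing]

theorem laplace_aeval_derivEnd (p : Polynomial ℂ) (f : testFunSubmodule) (l : ℝ) :
    laplace (Polynomial.aeval derivEnd p f) l = p.eval (l : ℂ) * laplace f l := by
  induction p using Polynomial.induction_on' generalizing f with
  | add p q hp hq =>
    rw [map_add, LinearMap.add_apply, laplace, map_add, Polynomial.eval_add, add_mul]
    exact congrArg₂ _ (hp f) (hq f)
  | monomial n a =>
    induction n generalizing f with
    | zero => simp [laplace]
    | succ n ih =>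
      rw [← Polynomial.monomial_mul_X, map_mul, Module.End.mul_apply, Polynomial.aeval_X, ih,
        laplace, expPolyPairing_derivEnd]
      simp [laplace, expPolyPairing_zero]
      ring

theorem continuous_laplace (f : testFunSubmodule) : Continuous (laplace f) := by
  have h : ∀ l : ℝ, laplace f l = ∫ t in tsupport f.1, Complex.exp (-l * t) * f.1 t := by
    intro l
    rw [laplace_apply, setIntegral_eq_integral_of_forall_compl_eq_zero,
      setIntegral_eq_integral_of_forall_compl_eq_zero]
    · exact fun t ht => by rw [image_eq_zero_of_notMem_tsupport ht, mul_zero]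
    · exact fun t ht => by rw [f.2.eq_zero_of_notMem ht, mul_zero]
  have hf := f.2.continuous
  rw [funext h]
  exact continuous_parametric_integral_of_continuous (by unfold Function.uncurry; fun_prop) f.2.2.1

theorem exists_norm_laplace_le (f : testFunSubmodule) :
    ∃ a > 0, ∃ C, ∀ l, 0 ≤ l → ‖laplace f l‖ ≤ C * Real.exp (-a * l) := by
  obtain ⟨a, ha, hfa⟩ := f.2.exists_pos_le_s5
  refine ⟨a, ha, ∫ t in Set.Ioi (0 : ℝ), ‖f.1 t‖, fun l hl => ?_⟩
  rw [laplace_apply, mul_comm, ← integral_const_mul]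
  refine norm_integral_le_of_norm_le ((f.2.integrable_s5 _).norm.const_mul _) (.of_forall fun t => ?_)
  by_cases ht : f.1 t = 0
  · simp [ht]
  · rw [norm_mul, Complex.norm_exp]
    gcongr
    simp
    nlinarith [hfa t ht]

theorem memLp_laplace (f : testFunSubmodule) : MemLp (laplace f) 2 μ₊ := by
  have hc := continuous_laplace f
  rw [memLp_two_iff_integrable_sq_norm hc.aestronglyMeasurable]
  obtain ⟨a, ha, C, hC⟩ := exists_norm_laplace_le f
  refine integrable_of_isBigO_exp_neg (b := 2 * a) (by positivity) (by fun_prop) ?_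
  refine Asymptotics.IsBigO.of_bound (C ^ 2) ((Filter.eventually_ge_atTop 0).mono fun l hl => ?_)
  have := pow_le_pow_left₀ (norm_nonneg _) (hC l hl) 2
  rw [mul_pow, ← Real.exp_nat_mul] at this
  rw [norm_pow, norm_norm, Real.norm_eq_abs, Real.abs_exp]
  rwa [show -(2 * a) * l = ((2 : ℕ) : ℝ) * (-a * l) by push_cast; ring]

/-- The Laplace transform as a linear map into `L²(0,∞)`. -/
def laplaceL2 : testFunSubmodule →ₗ[ℂ] Lp ℂ 2 μ₊ where
  toFun f := (memLp_laplace f).toLp _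
  map_add' f g := by
    rw [← MemLp.toLp_add]
    congr 1 with l
    exact map_add _ f g
  map_smul' c f := by
    rw [RingHom.id_apply, ← MemLp.toLp_const_smul]
    congr 1 with l
    exact map_smul _ c f

/-! ### Density of Laplace transforms multiplied by a polynomial -/

theorem isBigO_polynomial_eval_exp (p : Polynomial ℂ) {b : ℝ} (hb : 0 < b) :
    (fun l : ℝ => p.eval (l : ℂ)) =O[Filter.atTop] fun l => Real.exp (b * l) := by
  induction p using Polynomial.induction_on' with
  | add p q hp hq => simpa only [Polynomial.eval_add] using hp.add hq
  | monomial n a =>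
    simp only [Polynomial.eval_monomial]
    refine Asymptotics.IsBigO.const_mul_left ?_ a
    refine Asymptotics.IsBigO.trans (.of_norm_eventuallyLE (.of_forall fun l => ?_))
      (isLittleO_pow_exp_pos_mul_atTop n hb).norm_left.isBigO
    simp

theorem memLp_exp_smul_polynomial_eval (p : Polynomial ℂ) {a : ℝ} (ha : 0 < a) :
    MemLp (fun l : ℝ => Real.exp (-a * l) • p.eval (l : ℂ)) 2 μ₊ := by
  have hc : Continuous fun l : ℝ => Real.exp (-a * l) • p.eval (l : ℂ) := by fun_prop
  rw [memLp_two_iff_integrable_sq_norm hc.aestronglyMeasurable]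
  refine integrable_of_isBigO_exp_neg (b := a) ha (by fun_prop) ?_
  have h1 : (fun l : ℝ => Real.exp (-a * l) • p.eval (l : ℂ)) =O[Filter.atTop]
      fun l => Real.exp (-a * l) • Real.exp (a / 2 * l) :=
    (Asymptotics.isBigO_refl _ _).smul (isBigO_polynomial_eval_exp p (by positivity))
  refine (h1.norm_left.pow 2).congr_right fun l => ?_
  rw [smul_eq_mul, ← Real.exp_add, ← Real.exp_nat_mul]
  congr 1
  push_cast
  ring

/-- A function, integrable against every decaying exponential, whose Laplace transform is
orthogonal to all real test functions, vanishes almost everywhere. -/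
theorem ae_eq_zero_of_integral_laplace_eq_zero {w : ℝ → ℂ}
    (hw : ∀ a > 0, Integrable (fun l => Real.exp (-a * l) • w l) μ₊)
    (h : ∀ φ : ℝ → ℝ, ContDiff ℝ ∞ φ → HasCompactSupport φ → tsupport φ ⊆ Set.Ioi 0 →
      ∫ l in Set.Ioi (0 : ℝ), (∫ t in Set.Ioi (0 : ℝ), Real.exp (-l * t) * φ t) • w l = 0) :
    ∀ᵐ l ∂μ₊, w l = 0 := by
  set G : ℝ → ℂ := fun t => ∫ l in Set.Ioi (0 : ℝ), Real.exp (-t * l) • w l with hG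
  have hmeas : AEStronglyMeasurable w μ₊ := by
    have := (hw 1 one_pos).aestronglyMeasurable
    have h2 : AEStronglyMeasurable (fun l : ℝ => Real.exp l) μ₊ :=
      Real.continuous_exp.aestronglyMeasurable
    refine (h2.smul this).congr (.of_forall fun l => ?_)
    simp only [Pi.smul_apply', smul_smul, ← Real.exp_add]
    simp
  have hGc : ContinuousOn G (Set.Ioi 0) := by
    intro t₀ ht₀
    have ht₀' : 0 < t₀ := ht₀
    have : ContinuousOn G (Set.Ioi (t₀ / 2)) := by
      refine continuousOn_of_dominated (bound := fun l => ‖Real.exp (-(t₀ / 2) * l) • w l‖)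
        (fun t ht => (hw t ?_).aestronglyMeasurable) (fun t ht => ?_) (hw _ (by positivity)).norm
        (.of_forall fun l => by fun_prop)
      · exact (half_pos ht₀').trans ht
      · refine (ae_restrict_mem measurableSet_Ioi).mono fun l hl => ?_
        rw [norm_smul, norm_smul, Real.norm_eq_abs, Real.norm_eq_abs, Real.abs_exp, Real.abs_exp]
        gcongr
        · exact (Set.mem_Ioi.1 hl).le
        · exact (Set.mem_Ioi.1 ht).le
    exact (this.continuousAt (Ioi_mem_nhds (by linarith))).continuousWithinAt
  have hGae : ∀ᵐ t, t ∈ Set.Ioi (0 : ℝ) → G t = 0 := by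
    refine isOpen_Ioi.ae_eq_zero_of_integral_contDiff_smul_eq_zero
      (hGc.locallyIntegrableOn measurableSet_Ioi) fun φ hφ hφc hφs => ?_
    have hφ0 : ∀ x ∉ Set.Ioi (0 : ℝ), φ x = 0 := fun x hx =>
      image_eq_zero_of_notMem_tsupport fun hx' => hx (hφs hx')
    obtain ⟨a, ha, hφa⟩ : ∃ a > 0, ∀ t, φ t ≠ 0 → a ≤ t := by
      simpa using (IsTestFun.ofReal hφ hφc hφs).exists_pos_le_s5
    rw [← setIntegral_eq_integral_of_forall_compl_eq_zero (s := Set.Ioi (0 : ℝ))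
      (fun x hx => by rw [hφ0 x hx, zero_smul]), ← h φ hφ hφc hφs]
    simp only [hG, ← integral_smul, ← integral_smul_const]
    rw [integral_integral_swap]
    · refine integral_congr_ae (.of_forall fun l => ?_)
      refine integral_congr_ae (.of_forall fun t => ?_)
      simp only [smul_smul]
      ring_nf
    · have hφi : Integrable φ μ₊ := hφ.continuous.integrable_of_hasCompactSupport hφc
      refine Integrable.mono' (hφi.norm.mul_prod (hw a ha).norm) ?_ ?_
      · refine AEStronglyMeasurable.smul (f := fun z : ℝ × ℝ => φ z.1) ?_
          (AEStronglyMeasurable.smul (f := fun z : ℝ × ℝ => Real.exp (-z.1 * z.2))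
            (g := fun z : ℝ × ℝ => w z.2) ?_ hmeas.comp_snd)
        · exact (hφ.continuous.comp continuous_fst).aestronglyMeasurable
        · exact Continuous.aestronglyMeasurable (by fun_prop)
      · rw [Measure.prod_restrict]
        refine (ae_restrict_mem (measurableSet_Ioi.prod measurableSet_Ioi)).mono fun z hz => ?_
        simp only [Function.uncurry, norm_smul, Real.norm_eq_abs, Real.abs_exp]
        by_cases hz0 : φ z.1 = 0
        · simp [hz0]
        · gcongr
          · exact (Set.mem_Ioi.1 hz.2).le
          · exact hφa _ hz0
  have hG0 : Set.EqOn G (fun _ => 0) (Set.Ioi 0) :=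
    Measure.eqOn_open_of_ae_eq (μ := volume) ((ae_restrict_iff' measurableSet_Ioi).2 hGae)
      isOpen_Ioi hGc continuousOn_const
  have hae := ae_eq_zero_of_integral_exp_pow_smul_eq_zero (hw 1 one_pos) fun n => by
    refine Eq.trans ?_ (hG0 (show (0 : ℝ) < n + 1 by positivity))
    refine integral_congr_ae (.of_forall fun l => ?_)
    simp only [smul_smul]
    rw [← Real.exp_nat_mul, ← Real.exp_add]
    ring_nf
  filter_upwards [hae] with l hl
  exact (smul_eq_zero.1 hl).resolve_left (Real.exp_pos _).ne'

theorem exists_norm_laplaceL2_sub_aeval_lt {p : Polynomial ℂ} (hp : p ≠ 0)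
    (f : testFunSubmodule) {ε : ℝ} (hε : 0 < ε) :
    ∃ φ, ‖laplaceL2 (f - Polynomial.aeval derivEnd p φ)‖ < ε := by
  set K := LinearMap.range (laplaceL2 ∘ₗ Polynomial.aeval derivEnd p)
  suffices hKo : Kᗮ = ⊥ by
    have hmem : laplaceL2 f ∈ K.topologicalClosure := by
      rw [Submodule.topologicalClosure_eq_top_iff.2 hKo]
      trivial
    obtain ⟨_, ⟨φ, rfl⟩, hφ⟩ := Metric.mem_closure_iff.1 hmem ε hε
    refine ⟨φ, ?_⟩
    rwa [map_sub, ← dist_eq_norm]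
  rw [Submodule.eq_bot_iff]
  intro g hg
  have hw0 : ∀ᵐ l : ℝ ∂μ₊, conj (p.eval (l : ℂ)) * g l = 0 := by
    refine ae_eq_zero_of_integral_laplace_eq_zero (fun a ha => ?_) fun φ hφ hφc hφs => ?_
    · refine ((memLp_exp_smul_polynomial_eval p ha).star.integrable_mul (Lp.memLp g)).congr
        (.of_forall fun l => ?_)
      simp [mul_assoc, ← Complex.exp_conj]
    · have htest := IsTestFun.ofReal hφ hφc hφs
      have hlap : ∀ l : ℝ, laplace ⟨_, htest⟩ l =
          ((∫ t in Set.Ioi (0 : ℝ), Real.exp (-l * t) * φ t : ℝ) : ℂ) := by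
        intro l
        refine (laplace_apply _ l).trans (Eq.trans ?_ integral_complex_ofReal)
        simp
      have h := (Submodule.mem_orthogonal _ _).1 hg _ ⟨⟨_, htest⟩, rfl⟩
      rw [L2.inner_def] at h
      rw [← h]
      refine integral_congr_ae ?_
      filter_upwards [(memLp_laplace (Polynomial.aeval derivEnd p ⟨_, htest⟩)).coeFn_toLp]
        with l hl
      simp only [LinearMap.comp_apply, laplaceL2, LinearMap.coe_mk, AddHom.coe_mk]
      rw [hl, laplace_aeval_derivEnd, hlap]
      simp only [RCLike.inner_apply, map_mul, Complex.conj_ofReal, Complex.real_smul]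
      ring
  have hroots : ∀ᵐ l : ℝ ∂μ₊, p.eval (l : ℂ) ≠ 0 := by
    refine ae_restrict_of_ae ?_
    have hfin : {l : ℝ | p.eval (l : ℂ) = 0}.Finite :=
      (p.roots.toFinset.finite_toSet.preimage Complex.ofReal_injective.injOn).subset
        fun l hl => by simpa [hp] using hl
    simpa [ae_iff] using hfin.measure_zero volume
  rw [Lp.eq_zero_iff_ae_eq_zero]
  filter_upwards [hw0, hroots] with l h1 h2
  exact (mul_eq_zero.1 h1).resolve_left (by simpa using h2)

/-! ### Hankel forms -/

theorem integrable_hankel {v : ℝ → ℂ} (hv : Continuous v) (f g : testFunSubmodule) :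
    Integrable (fun z : ℝ × ℝ => v (z.1 + z.2) * f.1 z.2 * conj (g.1 z.1)) (μ₊.prod μ₊) := by
  have hf := f.2.continuous
  have hg := g.2.continuous
  refine Continuous.integrable_of_hasCompactSupport (by fun_prop) ?_
  refine HasCompactSupport.intro (IsCompact.prod g.2.2.1 f.2.2.1) fun z hz => ?_
  rw [Set.mem_prod, not_and_or] at hz
  rcases hz with hz | hz
  · rw [image_eq_zero_of_notMem_tsupport hz, map_zero, mul_zero]
  · rw [image_eq_zero_of_notMem_tsupport hz, mul_zero, zero_mul]

/-- The sesquilinear Hankel form with a continuous kernel. -/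
def hankelForm (v : ℝ → ℂ) (hv : Continuous v) :
    testFunSubmodule →ₗ[ℂ] testFunSubmodule →ₗ⋆[ℂ] ℂ :=
  LinearMap.mk₂'ₛₗ (RingHom.id ℂ) (starRingEnd ℂ)
    (fun f g => ∫ z : ℝ × ℝ, v (z.1 + z.2) * f.1 z.2 * conj (g.1 z.1) ∂(μ₊.prod μ₊))
    (fun f₁ f₂ g => by
      rw [← integral_add (integrable_hankel hv f₁ g) (integrable_hankel hv f₂ g)]
      congr 1 with z
      simp only [Submodule.coe_add, Pi.add_apply]
      ring)
    (fun c f g => by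
      rw [smul_eq_mul, ← integral_const_mul]
      congr 1 with z
      simp only [Submodule.coe_smul, Pi.smul_apply, smul_eq_mul, RingHom.id_apply]
      ring)
    (fun f g₁ g₂ => by
      rw [← integral_add (integrable_hankel hv f g₁) (integrable_hankel hv f g₂)]
      congr 1 with z
      simp only [Submodule.coe_add, Pi.add_apply, map_add]
      ring)
    (fun c f g => by
      rw [smul_eq_mul, ← integral_const_mul]
      congr 1 with z
      simp only [Submodule.coe_smul, Pi.smul_apply, smul_eq_mul, map_mul]
      ring)

theorem hankelForm_apply {v : ℝ → ℂ} (hv : Continuous v) (f g : testFunSubmodule) :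
    hankelForm v hv f g =
      ∫ z : ℝ × ℝ, v (z.1 + z.2) * f.1 z.2 * conj (g.1 z.1) ∂(μ₊.prod μ₊) := rfl

theorem hankelQF_eq_hankelForm {v : ℝ → ℂ} (hv : Continuous v) (f : testFunSubmodule) :
    hankelQF v f.1 = hankelForm v hv f f :=
  (integral_prod _ (integrable_hankel hv f f)).symm

theorem ae_prod_halfLine : ∀ᵐ z : ℝ × ℝ ∂(μ₊.prod μ₊), 0 < z.1 ∧ 0 < z.2 := by
  rw [Measure.prod_restrict]
  exact ae_restrict_mem (measurableSet_Ioi.prod measurableSet_Ioi)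

theorem hankelForm_conj_symm {v : ℝ → ℂ} (hv : Continuous v) (hreal : ∀ t, 0 < t → (v t).im = 0)
    (f g : testFunSubmodule) : hankelForm v hv f g = conj (hankelForm v hv g f) := by
  rw [hankelForm_apply, hankelForm_apply, ← integral_conj, ← integral_prod_swap]
  refine integral_congr_ae (ae_prod_halfLine.mono fun z hz => ?_)
  have : conj (v (z.1 + z.2)) = v (z.1 + z.2) :=
    Complex.conj_eq_iff_im.2 (hreal _ (add_pos hz.1 hz.2))
  simp only [Prod.fst_swap, Prod.snd_swap, map_mul, Complex.conj_conj, this, add_comm z.2]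
  ring

theorem hankelForm_eq_zero {v : ℝ → ℂ} (hv : Continuous v) {u : testFunSubmodule}
    (hu : ∀ t : ℝ, ∫ s in Set.Ioi (0 : ℝ), v (t + s) * u.1 s = 0) : hankelForm v hv u = 0 := by
  ext g
  rw [hankelForm_apply, integral_prod _ (integrable_hankel hv u g)]
  simp [integral_mul_const, hu]

/-! ### The Carleman form -/

theorem integrable_exp_hankel (f : testFunSubmodule) :
    Integrable (fun y : (ℝ × ℝ) × ℝ =>
      ((Real.exp (-(y.1.1 + y.1.2) * y.2) : ℝ) : ℂ) * f.1 y.1.2 * conj (f.1 y.1.1))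
      ((μ₊.prod μ₊).prod μ₊) := by
  obtain ⟨a, ha, hfa⟩ := f.2.exists_pos_le_s5
  have hf := f.2.continuous
  have hexp : Integrable (fun l => Real.exp (-a * l)) μ₊ := exp_neg_integrableOn_Ioi 0 ha
  refine Integrable.mono' (((f.2.integrable_s5 μ₊).norm.mul_prod
    (f.2.integrable_s5 μ₊).norm).mul_prod hexp) (Continuous.aestronglyMeasurable (by fun_prop)) ?_
  have hae : ∀ᵐ y : (ℝ × ℝ) × ℝ ∂((μ₊.prod μ₊).prod μ₊), 0 < y.1.1 ∧ 0 < y.2 := by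
    rw [Measure.prod_restrict, Measure.prod_restrict]
    exact (ae_restrict_mem ((measurableSet_Ioi.prod measurableSet_Ioi).prod
      measurableSet_Ioi)).mono fun y hy => ⟨hy.1.1, hy.2⟩
  filter_upwards [hae] with y hy
  rw [norm_mul, norm_mul, RCLike.norm_conj, Complex.norm_real, Real.norm_eq_abs, Real.abs_exp]
  by_cases h0 : f.1 y.1.2 = 0
  · simp [h0]
  · have : Real.exp (-(y.1.1 + y.1.2) * y.2) ≤ Real.exp (-a * y.2) := by
      apply Real.exp_le_exp.2
      nlinarith [hfa _ h0, hy.1, hy.2]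
    calc _ ≤ Real.exp (-a * y.2) * ‖f.1 y.1.2‖ * ‖f.1 y.1.1‖ := by gcongr
      _ = _ := by ring

theorem integral_exp_hankel_eq (f : testFunSubmodule) {z : ℝ × ℝ} (hz : 0 < z.1 ∧ 0 < z.2) :
    ∫ l in Set.Ioi (0 : ℝ),
      ((Real.exp (-(z.1 + z.2) * l) : ℝ) : ℂ) * f.1 z.2 * conj (f.1 z.1) =
        (((z.1 + z.2)⁻¹ : ℝ) : ℂ) * f.1 z.2 * conj (f.1 z.1) := by
  rw [integral_mul_const, integral_mul_const, integral_complex_ofReal,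
    integral_exp_mul_Ioi (by linarith [hz.1, hz.2])]
  rw [mul_zero, Real.exp_zero, neg_div_neg_eq, one_div]

theorem integrable_carleman (f : testFunSubmodule) :
    Integrable (fun z : ℝ × ℝ => (((z.1 + z.2)⁻¹ : ℝ) : ℂ) * f.1 z.2 * conj (f.1 z.1))
      (μ₊.prod μ₊) :=
  (integrable_exp_hankel f).integral_prod_left.congr
    (ae_prod_halfLine.mono fun _ hz => integral_exp_hankel_eq f hz)

theorem integral_carleman (f : testFunSubmodule) :
    ∫ z : ℝ × ℝ, (((z.1 + z.2)⁻¹ : ℝ) : ℂ) * f.1 z.2 * conj (f.1 z.1) ∂(μ₊.prod μ₊) =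
      ((‖laplaceL2 f‖ ^ 2 : ℝ) : ℂ) := by
  rw [← integral_congr_ae (ae_prod_halfLine.mono fun _ hz => integral_exp_hankel_eq f hz),
    integral_integral_swap (integrable_exp_hankel f), Complex.ofReal_pow]
  refine Eq.trans ?_ (inner_self_eq_norm_sq_to_K (𝕜 := ℂ) (laplaceL2 f))
  rw [L2.inner_def]
  refine integral_congr_ae ?_
  filter_upwards [(memLp_laplace f).coeFn_toLp] with l hl
  simp only [laplaceL2, LinearMap.coe_mk, AddHom.coe_mk]
  rw [hl, RCLike.inner_apply, laplace_apply, ← integral_conj, mul_comm, ← integral_prod_mul]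
  congr 1 with z
  simp only [map_mul, ← Complex.exp_conj, map_neg, Complex.conj_ofReal]
  rw [show -(z.1 + z.2) * l = -l * z.1 + -l * z.2 by ring, Real.exp_add]
  push_cast
  ring

theorem hankelQF_carleman_add {v : ℝ → ℂ} (hv : Continuous v) (f : testFunSubmodule) :
    hankelQF (fun t : ℝ => ((t⁻¹ : ℝ) : ℂ) + v t) f.1 =
      ((‖laplaceL2 f‖ ^ 2 : ℝ) : ℂ) + hankelForm v hv f f := by
  have hadd : ∀ z : ℝ × ℝ,
      ((((z.1 + z.2)⁻¹ : ℝ) : ℂ) + v (z.1 + z.2)) * f.1 z.2 * conj (f.1 z.1) =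
        (((z.1 + z.2)⁻¹ : ℝ) : ℂ) * f.1 z.2 * conj (f.1 z.1) +
          v (z.1 + z.2) * f.1 z.2 * conj (f.1 z.1) := fun z => by ring
  rw [hankelForm_apply, ← integral_carleman,
    ← integral_add (integrable_carleman f) (integrable_hankel hv f f), ← funext hadd,
    integral_prod]
  · rfl
  · rw [funext hadd]
    exact (integrable_carleman f).add (integrable_hankel hv f f)

/-! ### Finite-rank kernels -/

theorem continuous_finiteRankKernel (M : ℕ) (α : ℕ → ℂ) (P : ℕ → Polynomial ℂ) :
    Continuous (finiteRankKernel M α P) := by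
  unfold finiteRankKernel
  fun_prop

/-- A polynomial whose differential operator maps test functions into the kernel of the
Hankel form of `finiteRankKernel M α P`. -/
def annihilator (M : ℕ) (α : ℕ → ℂ) (P : ℕ → Polynomial ℂ) : Polynomial ℂ :=
  ∏ m ∈ Finset.range M, (Polynomial.X - Polynomial.C (α m)) ^ ((P m).natDegree + 1)

theorem annihilator_ne_zero (M : ℕ) (α : ℕ → ℂ) (P : ℕ → Polynomial ℂ) :
    annihilator M α P ≠ 0 :=
  Finset.prod_ne_zero_iff.2 fun m _ => pow_ne_zero _ (Polynomial.X_sub_C_ne_zero (α m))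

theorem hankelForm_aeval_annihilator (M : ℕ) (α : ℕ → ℂ) (P : ℕ → Polynomial ℂ)
    (φ : testFunSubmodule) :
    hankelForm _ (continuous_finiteRankKernel M α P)
      (Polynomial.aeval derivEnd (annihilator M α P) φ) = 0 := by
  set u := Polynomial.aeval derivEnd (annihilator M α P) φ with hu
  refine hankelForm_eq_zero _ fun t => ?_
  have hterm : ∀ m ∈ Finset.range M,
      expPolyPairing (α m) ((P m).comp (Polynomial.X + Polynomial.C (t : ℂ))) u = 0 := by
    intro m hm
    obtain ⟨r, hr⟩ := Finset.dvd_prod_of_mem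
      (fun m => (Polynomial.X - Polynomial.C (α m)) ^ ((P m).natDegree + 1)) hm
    rw [hu, annihilator, hr, map_mul, Module.End.mul_apply]
    refine expPolyPairing_aeval_X_sub_C_pow _ _ _ ?_ _
    rw [Polynomial.natDegree_comp, Polynomial.natDegree_X_add_C, mul_one]
    exact Nat.lt_succ_self _
  have hsplit : ∀ s : ℝ, finiteRankKernel M α P (t + s) * u.1 s =
      ∑ m ∈ Finset.range M, Complex.exp (-(α m) * t) *
        (((P m).comp (Polynomial.X + Polynomial.C (t : ℂ))).eval (s : ℂ) *
          Complex.exp (-(α m) * s) * u.1 s) := by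
    intro s
    rw [finiteRankKernel, Finset.sum_mul]
    refine Finset.sum_congr rfl fun m _ => ?_
    rw [Complex.ofReal_add, mul_add, Complex.exp_add, Polynomial.eval_comp, Polynomial.eval_add,
      Polynomial.eval_X, Polynomial.eval_C, add_comm (s : ℂ)]
    ring
  simp only [hsplit]
  rw [integral_finsetSum]
  · refine Finset.sum_eq_zero fun m hm => ?_
    rw [integral_const_mul]
    exact mul_eq_zero_of_right _ (hterm m hm)
  · exact fun m _ => (u.2.integrable_mul (by fun_prop) _).const_mul _

theorem exists_mem_ker_norm_laplaceL2_sub_lt (M : ℕ) (α : ℕ → ℂ) (P : ℕ → Polynomial ℂ)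
    (f : testFunSubmodule) (ε : ℝ) (hε : ε > 0) :
    ∃ u ∈ LinearMap.ker (hankelForm _ (continuous_finiteRankKernel M α P)),
      ‖laplaceL2 (f - u)‖ < ε := by
  obtain ⟨φ, hφ⟩ := exists_norm_laplaceL2_sub_aeval_lt (annihilator_ne_zero M α P) f hε
  exact ⟨_, hankelForm_aeval_annihilator M α P φ, hφ⟩

/-! ### Negative subspaces -/

theorem negSubspace_zero (Q : (ℝ → ℂ) → ℂ) : negSubspace Q 0 :=
  ⟨⊥, fun _ hf => (Submodule.mem_bot ℂ).1 hf ▸ testFunSubmodule.zero_mem, finrank_bot ℂ _,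
    fun _ hf h => absurd ((Submodule.mem_bot ℂ).1 hf) h⟩

theorem exists_linearMap_of_negSubspace {Q : (ℝ → ℂ) → ℂ} {n : ℕ} (hn : n ≠ 0)
    (h : negSubspace Q n) :
    ∃ S : (Fin n → ℂ) →ₗ[ℂ] testFunSubmodule, ∀ c ≠ 0, Q (S c).1 < 0 := by
  obtain ⟨L, hL, hdim, hneg⟩ := h
  have : FiniteDimensional ℂ L := FiniteDimensional.of_finrank_pos (by omega)
  let e := (Module.finBasisOfFinrankEq ℂ L hdim).equivFun.symm
  refine ⟨Submodule.inclusion (show L ≤ testFunSubmodule from hL) ∘ₗ e.toLinearMap,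
    fun c hc => hneg _ (e c).2 ?_⟩
  simpa using hc

theorem negSubspace_of_linearMap {Q : (ℝ → ℂ) → ℂ} (hQ : Q 0 = 0) {n : ℕ}
    (S : (Fin n → ℂ) →ₗ[ℂ] testFunSubmodule) (hS : ∀ c ≠ 0, Q (S c).1 < 0) :
    negSubspace Q n := by
  have hinj : Function.Injective (testFunSubmodule.subtype ∘ₗ S) := by
    rw [← LinearMap.ker_eq_bot, LinearMap.ker_eq_bot']
    intro c hc
    by_contra hc0
    have hlt := hS c hc0
    rw [show (S c).1 = 0 from hc, hQ] at hlt
    exact lt_irrefl _ hlt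
  refine ⟨LinearMap.range (testFunSubmodule.subtype ∘ₗ S), ?_, ?_, ?_⟩
  · rintro _ ⟨c, rfl⟩
    exact (S c).2
  · rw [LinearMap.finrank_range_of_inj hinj, Module.finrank_fin_fun]
  · rintro _ ⟨c, rfl⟩ hne
    exact hS c fun hc => hne (by rw [hc, map_zero])

theorem hankelQF_zero (h : ℝ → ℂ) : hankelQF h 0 = 0 := by
  simp [hankelQF]

/-- For the Carleman kernel perturbed by a finite-rank kernel `v`, the total number of
negative squares of the Hankel form of `h = t⁻¹ + v` equals that of `v`; in particular
the form of `h` is positive iff that of `v` is. -/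
theorem carleman_plus_finite_rank_negative_count (M : ℕ) (α : ℕ → ℂ) (P : ℕ → Polynomial ℂ)
    (hdist : ∀ m < M, ∀ n < M, m ≠ n → α m ≠ α n)
    (hre : ∀ m < M, 0 < (α m).re)
    (hPne : ∀ m < M, P m ≠ 0)
    (hreal : ∀ t : ℝ, 0 < t → (finiteRankKernel M α P t).im = 0) :
    subspaceDimSup (negSubspace (hankelQF
        (fun t : ℝ => ((t⁻¹ : ℝ) : ℂ) + finiteRankKernel M α P t))) =
      subspaceDimSup (negSubspace (hankelQF (finiteRankKernel M α P)))
    ∧ ((∀ f : ℝ → ℂ, IsTestFun f →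
        0 ≤ hankelQF (fun t : ℝ => ((t⁻¹ : ℝ) : ℂ) + finiteRankKernel M α P t) f) ↔
      (∀ f : ℝ → ℂ, IsTestFun f → 0 ≤ hankelQF (finiteRankKernel M α P) f)) := by
  set v := finiteRankKernel M α P
  have hv : Continuous v := continuous_finiteRankKernel M α P
  have hsymm := hankelForm_conj_symm hv hreal
  have him : ∀ f, (hankelForm v hv f f).im = 0 := fun f =>
    Complex.conj_eq_iff_im.1 (hsymm f f).symm
  have happrox := exists_mem_ker_norm_laplaceL2_sub_lt M α P
  have hneg : ∀ f : testFunSubmodule, hankelQF v f.1 < 0 ↔ (hankelForm v hv f f).re < 0 := by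
    intro f
    rw [hankelQF_eq_hankelForm hv, Complex.neg_iff]
    simp [him]
  have hneg' : ∀ f : testFunSubmodule, hankelQF (fun t : ℝ => ((t⁻¹ : ℝ) : ℂ) + v t) f.1 < 0 ↔
      ‖laplaceL2 f‖ ^ 2 + (hankelForm v hv f f).re < 0 := by
    intro f
    rw [hankelQF_carleman_add hv, Complex.neg_iff, Complex.add_re, Complex.add_im,
      Complex.ofReal_re, Complex.ofReal_im, him]
    simp
  have hnonneg : ∀ f : testFunSubmodule, 0 ≤ hankelQF v f.1 ↔ 0 ≤ (hankelForm v hv f f).re := by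
    intro f
    rw [hankelQF_eq_hankelForm hv, Complex.nonneg_iff]
    simp [him]
  have hnonneg' : ∀ f : testFunSubmodule,
      0 ≤ hankelQF (fun t : ℝ => ((t⁻¹ : ℝ) : ℂ) + v t) f.1 ↔
        0 ≤ ‖laplaceL2 f‖ ^ 2 + (hankelForm v hv f f).re := by
    intro f
    rw [hankelQF_carleman_add hv, Complex.nonneg_iff, Complex.add_re, Complex.add_im,
      Complex.ofReal_re, Complex.ofReal_im, him]
    simp
  constructor
  · have hiff : negSubspace (hankelQF fun t : ℝ => ((t⁻¹ : ℝ) : ℂ) + v t) =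
        negSubspace (hankelQF v) := by
      ext n
      constructor
      · rintro ⟨L, hL, hdim, hLneg⟩
        refine ⟨L, hL, hdim, fun f hf hf0 => (hneg ⟨f, hL f hf⟩).2 ?_⟩
        have := (hneg' ⟨f, hL f hf⟩).1 (hLneg f hf hf0)
        linarith [sq_nonneg ‖laplaceL2 ⟨f, hL f hf⟩‖]
      · intro h
        rcases eq_or_ne n 0 with rfl | hn
        · exact negSubspace_zero _
        obtain ⟨S, hS⟩ := exists_linearMap_of_negSubspace hn h
        obtain ⟨S', hS'⟩ := exists_linearMap_norm_sq_add_re_neg (hankelForm v hv) hsymm laplaceL2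
          happrox S fun c hc => (hneg _).1 (hS c hc)
        exact negSubspace_of_linearMap (hankelQF_zero _) S' fun c hc => (hneg' _).2 (hS' c hc)
    rw [hiff]
  · constructor
    · intro h f hf
      let F : testFunSubmodule := ⟨f, hf⟩
      refine (hnonneg F).2 (le_of_forall_pos_le_add fun ε hε => ?_)
      obtain ⟨u, hu, hlt⟩ := happrox F (√ε) (Real.sqrt_pos.2 hε)
      have hu' : hankelForm v hv u = 0 := hu
      have hFu : hankelForm v hv F u = 0 := by rw [hsymm, hu']; simp
      have h1 := (hnonneg' (F - u)).1 (h _ (F - u).2)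
      have h2 : hankelForm v hv (F - u) (F - u) = hankelForm v hv F F := by
        simp [hu', hFu]
      have h3 := (Real.lt_sqrt (norm_nonneg _)).1 hlt
      rw [h2] at h1
      linarith
    · intro h f hf
      have := (hnonneg ⟨f, hf⟩).1 (h f hf)
      exact (hnonneg' ⟨f, hf⟩).2 (by positivity)
end
end
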